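/- arXiv:2307.08497 — 4 statements merged into one kernel-verified Lean document; each statement's English description precedes it below -/
import Mathlib

section
/- Let r, n, m₀, m₁ ∈ ℕ be such that m := n − m₀ − m₁ − 2r > 0. Let G be a graph containing a geodesic path P = p₀…p_n of length n, and write B_i := B_G(p_i, r) for 0 ≤ i ≤ n. Suppose that some connected component C of G − ⋃_{i=0}^{n} B_i has at least one neighbour in ⋃_{i=0}^{m₀} B_i and at least one neighbour in ⋃_{i=n−m₁}^{n} B_i, but no neighbours in ⋃_{i=m₀+1}^{n−m₁−1} B_i. Then G contains a geodesic cycle of length at least 2m. -/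
/-!
Give every passage along an edge from `C` into the top balls `T` the gain `1`, every passage back
the gain `-1`, and all other passages the gain `0`. Leaving `C` through `T`, returning along the
balls around the path and re-entering `C` from the bottom balls `B` yields a closed walk of gain
`1`. A shortest closed walk of nonzero gain is a geodesic cycle, because a repeated vertex or a
shortcut would split it into shorter closed walks, whose gains vanish. A closed walk avoiding `T`
has gain zero, and so has one avoiding `B`: away from `B` the only exits from `C` lead into `T`, so
the gain telescopes to a difference of values of the indicator function of `C`. Hence the cycle
meets both `B` and `T`, whose distance is at least `m`, so that both its arcs between them are at
least that long.
-/

open SimpleGraph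

namespace RadialPaper

variable {V W N : Type*}

/-- The ball of radius `r` around a set `U` of vertices of `G`. -/
def ballSet (G : SimpleGraph V) (U : Set V) (r : ℕ) : Set V :=
  {v | ∃ u ∈ U, G.edist u v ≤ (r : ℕ∞)}

/-- `G` has radius at most `r`: some vertex has distance at most `r` from every vertex.
The empty graph has radius `0`; a nonempty disconnected graph has radius `∞`, hence
satisfies `radiusLE` for no `r`. -/
def radiusLE (G : SimpleGraph V) (r : ℕ) : Prop :=
  Nonempty V → ∃ v : V, ∀ w : V, G.edist v w ≤ (r : ℕ∞)

/-- `(Hg, B)` is a graph-decomposition of `G` modelled on `Hg`. -/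
def IsGraphDecomp (G : SimpleGraph V) (Hg : SimpleGraph N) (B : N → Set V) : Prop :=
  (∀ v : V, ∃ h : N, v ∈ B h) ∧
  (∀ ⦃u v : V⦄, G.Adj u v → ∃ h : N, u ∈ B h ∧ v ∈ B h) ∧
  (∀ v : V, (Hg.induce {h : N | v ∈ B h}).Connected)

/-- A subgraph `X` of `G` is `c`-quasi-geodesic. -/
def IsQuasiGeodesic (G : SimpleGraph V) (X : G.Subgraph) (c : ℕ) : Prop :=
  ∀ u v : X.verts, X.coe.edist u v ≤ (c : ℕ∞) * G.edist (u : V) (v : V)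

/-- The subgraph `Y` of `G` is a `(≥ k)`-subdivision of the graph `X`. -/
def IsSubdivGE (k : ℕ) (X : SimpleGraph W) {G : SimpleGraph V} (Y : G.Subgraph) : Prop :=
  ∃ (f : W → V) (p : ∀ ⦃u v : W⦄, X.Adj u v → G.Walk (f u) (f v)),
    Function.Injective f ∧
    (∀ ⦃u v : W⦄ (h : X.Adj u v), (p h).IsPath) ∧
    (∀ ⦃u v : W⦄ (h : X.Adj u v), k + 1 ≤ (p h).length) ∧
    (∀ ⦃u v : W⦄ (h : X.Adj u v), p h.symm = (p h).reverse) ∧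
    (∀ ⦃u v : W⦄ (h : X.Adj u v) (w : W), f w ∈ (p h).support → w = u ∨ w = v) ∧
    (∀ ⦃u v u' v' : W⦄ (h : X.Adj u v) (h' : X.Adj u' v'), s(u, v) ≠ s(u', v') →
      ∀ x : V, x ∈ (p h).support → x ∈ (p h').support →
        (x = f u ∨ x = f v) ∧ (x = f u' ∨ x = f v')) ∧
    Y.verts = Set.range f ∪ {x : V | ∃ (u v : W) (h : X.Adj u v), x ∈ (p h).support} ∧
    Y.edgeSet = {e : Sym2 V | ∃ (u v : W) (h : X.Adj u v), e ∈ (p h).edges}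

/-- `G` contains a `(≥ k)`-subdivision of `X` as a `c`-quasi-geodesic subgraph. -/
def ContainsQuasiGeodesicSubdivGE (G : SimpleGraph V) (k : ℕ) (X : SimpleGraph W) (c : ℕ) :
    Prop :=
  ∃ Y : G.Subgraph, IsSubdivGE k X Y ∧ IsQuasiGeodesic G Y c

/-- `X` is a minor of `Hg`. -/
def IsMinorOf (X : SimpleGraph W) (Hg : SimpleGraph N) : Prop :=
  ∃ B : W → Set N, (∀ w, (B w).Nonempty) ∧ (∀ w, (Hg.induce (B w)).Connected) ∧
    (∀ ⦃w w' : W⦄, w ≠ w' → Disjoint (B w) (B w')) ∧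
    (∀ ⦃w w' : W⦄, X.Adj w w' → ∃ a ∈ B w, ∃ b ∈ B w', Hg.Adj a b)

/-- A class of (finite) graphs, given on the canonical vertex sets `Fin n`, is minor-closed. -/
def MinorClosed (ℋ : ∀ n : ℕ, SimpleGraph (Fin n) → Prop) : Prop :=
  ∀ ⦃m n : ℕ⦄ (X : SimpleGraph (Fin m)) (Hg : SimpleGraph (Fin n)),
    ℋ n Hg → IsMinorOf X Hg → ℋ m X

/-- The triangle `K³`. -/
def triangleGraph : SimpleGraph (Fin 3) := ⊤

/-- The claw `K_{1,3}`, with centre `0`. -/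
def clawGraph : SimpleGraph (Fin 4) := SimpleGraph.fromRel (fun a _ => a = 0)

/-- The wrench graph: two adjacent vertices `0, 1` of degree three, with leaves `2,3` and
`4,5` respectively. -/
def wrenchGraph : SimpleGraph (Fin 6) :=
  SimpleGraph.fromRel (fun a b =>
    (a = 0 ∧ b = 1) ∨ (a = 0 ∧ b = 2) ∨ (a = 0 ∧ b = 3) ∨ (a = 1 ∧ b = 4) ∨ (a = 1 ∧ b = 5))

/-- The star `K_{1,m}`, with centre `none`. -/
def starGraph (m : ℕ) : SimpleGraph (Option (Fin m)) :=
  SimpleGraph.fromRel (fun a _ => a = none)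

/-- `Hg` is a disjoint union of paths: every connected component is a path. -/
def IsUnionOfPaths (Hg : SimpleGraph N) : Prop :=
  ∀ cc : Hg.ConnectedComponent, ∃ m : ℕ,
    Nonempty (Hg.induce cc.supp ≃g SimpleGraph.pathGraph m)

/-- `Hg` is a disjoint union of cycles: every connected component is a cycle. -/
def IsUnionOfCycles (Hg : SimpleGraph N) : Prop :=
  ∀ cc : Hg.ConnectedComponent, ∃ m : ℕ, 3 ≤ m ∧
    Nonempty (Hg.induce cc.supp ≃g SimpleGraph.cycleGraph m)

/-- `Hg` is a subdivided star, i.e. a `(≥ 0)`-subdivision of some star `K_{1,m}`. -/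
def IsSubdividedStar (Hg : SimpleGraph N) : Prop :=
  ∃ m : ℕ, IsSubdivGE 0 (starGraph m) (⊤ : Hg.Subgraph)

/-- `Hg` is a disjoint union of subdivided stars. -/
def IsUnionOfSubdividedStars (Hg : SimpleGraph N) : Prop :=
  ∀ cc : Hg.ConnectedComponent, IsSubdividedStar (Hg.induce cc.supp)

/-- A graph-decomposition is honest: bags of adjacent nodes intersect. -/
def Honest (Hg : SimpleGraph N) (B : N → Set V) : Prop :=
  ∀ ⦃h h' : N⦄, Hg.Adj h h' → (B h ∩ B h').Nonempty

/-- The outer-radial width of a decomposition of `G` is at most `r`. -/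
def OuterRadialWidthLE (G : SimpleGraph V) (B : N → Set V) (r : ℕ) : Prop :=
  ∀ h : N, ∃ z : V, ∀ v ∈ B h, G.edist z v ≤ (r : ℕ∞)

/-- The radial spread of a decomposition `(Hg, B)` of a graph with vertex set `V`
is at most `r`. -/
def RadialSpreadLE (Hg : SimpleGraph N) (B : N → Set V) (r : ℕ) : Prop :=
  ∀ v : V, radiusLE (Hg.induce {h : N | v ∈ B h}) r

/-- `φ` is an `(m, a, M, A, r)`-quasi-isometry from `Hg` to `G`. -/
def IsQuasiIsometry (Hg : SimpleGraph N) (G : SimpleGraph V) (m a M A r : ℕ)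
    (φ : N → V) : Prop :=
  (∀ h h' : N, Hg.edist h h' ≤ (m : ℕ∞) * G.edist (φ h) (φ h') + (a : ℕ∞)) ∧
  (∀ h h' : N, G.edist (φ h) (φ h') ≤ (M : ℕ∞) * Hg.edist h h' + (A : ℕ∞)) ∧
  (∀ v : V, ∃ h : N, G.edist v (φ h) ≤ (r : ℕ∞))

/-- `C` is a connected component of `G - S`: a maximal connected set of vertices
disjoint from `S`. -/
def IsCompOf (G : SimpleGraph V) (C S : Set V) : Prop :=
  C.Nonempty ∧ Disjoint C S ∧ (G.induce C).Connected ∧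
  ∀ D : Set V, C ⊆ D → Disjoint D S → (G.induce D).Connected → D = C

/-- The subgraph `P` of `G` is an `M₀`–`M₁` path meeting `C`. -/
def IsM01Path (G : SimpleGraph V) (M₀ M₁ C : Set V) (P : G.Subgraph) : Prop :=
  ∃ (x y : V) (q : G.Walk x y), q.IsPath ∧ q.toSubgraph = P ∧ x ∈ M₀ ∧ y ∈ M₁ ∧
    (∀ z ∈ q.support, z ≠ x → z ≠ y → z ∉ M₀ ∪ M₁) ∧ ∃ z ∈ q.support, z ∈ C

/-- The number of `M₀`–`M₁` paths meeting `C` that are contained in the subgraph `OS`. -/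
noncomputable def Wcount (G : SimpleGraph V) (M₀ M₁ C : Set V) (OS : G.Subgraph) : ℕ :=
  Set.ncard {P : G.Subgraph | P ≤ OS ∧ IsM01Path G M₀ M₁ C P}

section Gain

variable {A : Type*} [AddGroup A] {G : SimpleGraph V} {φ : V → V → A} {u v w : V}

/-- The gain of a walk in the gain graph on `G` in which passing from `u` to `v` contributes
`φ u v`. Only the values of `φ` on adjacent pairs matter, and the two directions of an edge may
have unrelated gains. -/
def gain (φ : V → V → A) (q : G.Walk u v) : A :=
  (q.darts.map fun d => φ d.fst d.snd).sum

@[simp]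
lemma gain_nil : gain φ (Walk.nil : G.Walk u u) = 0 := rfl

@[simp]
lemma gain_cons (h : G.Adj u v) (q : G.Walk v w) :
    gain φ (Walk.cons h q) = φ u v + gain φ q := by
  simp [gain]

@[simp]
lemma gain_append (q : G.Walk u v) (q' : G.Walk v w) :
    gain φ (q.append q') = gain φ q + gain φ q' := by
  simp [gain]

lemma gain_reverse (hφ : ∀ x y, φ y x = -φ x y) (q : G.Walk u v) :
    gain φ q.reverse = -gain φ q := by
  induction q with
  | nil => simp
  | @cons x y _ h q ih => simp [ih, hφ x y]

lemma gain_rotate_eq_zero_iff [DecidableEq V] (c : G.Walk u u) (hv : v ∈ c.support) :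
    gain φ (c.rotate v hv) = 0 ↔ gain φ c = 0 := by
  conv_rhs => rw [← c.take_spec hv]
  rw [Walk.rotate, gain_append, gain_append, add_eq_zero_comm]

lemma gain_eq_sub {f : V → A} (q : G.Walk u v)
    (hf : ∀ x ∈ q.support, ∀ y ∈ q.support, G.Adj x y → φ x y = f x - f y) :
    gain φ q = f u - f v := by
  induction q with
  | nil => simp
  | cons h q ih =>
    rw [gain_cons, hf _ (by simp) _ (by simp) h, ih, sub_add_sub_cancel]
    exact fun x hx y hy => hf x (by simp [hx]) y (by simp [hy])

lemma gain_eq_zero (q : G.Walk u v)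
    (hφ : ∀ x ∈ q.support, ∀ y ∈ q.support, G.Adj x y → φ x y = 0) : gain φ q = 0 :=
  (gain_eq_sub (f := 0) q (by simpa using hφ)).trans (sub_self 0)

/-- Every closed walk of `G` with fewer than `k` edges has gain zero. With `k` the length of a
closed walk of nonzero gain, this expresses that the walk is shortest possible. -/
def BalancedBelow (G : SimpleGraph V) (φ : V → V → A) (k : ℕ) : Prop :=
  ∀ ⦃x : V⦄ (c : G.Walk x x), c.length < k → gain φ c = 0

lemma BalancedBelow.gain_eq {k : ℕ} (hφ : ∀ x y, φ y x = -φ x y) (hk : BalancedBelow G φ k)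
    (a b : G.Walk u v) (hab : a.length + b.length < k) : gain φ a = gain φ b := by
  have h := hk (a.append b.reverse) (by simpa using hab)
  rwa [gain_append, gain_reverse hφ, ← sub_eq_add_neg, sub_eq_zero] at h

lemma BalancedBelow.gain_bypass [DecidableEq V] {k : ℕ} (hk : BalancedBelow G φ k)
    (q : G.Walk u v) (hq : q.length < k) : gain φ q.bypass = gain φ q := by
  induction q with
  | nil => simp [Walk.bypass]
  | @cons u _ _ h q ih =>
    rw [Walk.length_cons] at hq
    rw [gain_cons, ← ih (by omega), Walk.bypass]
    split_ifs with hu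
    · have hloop : gain φ (Walk.cons h (q.bypass.takeUntil u hu)) = 0 := by
        refine hk _ ?_
        have := q.bypass.length_takeUntil_le_length hu
        have := q.length_bypass_le_length
        rw [Walk.length_cons]
        omega
      calc gain φ (q.bypass.dropUntil u hu)
          = gain φ (Walk.cons h (q.bypass.takeUntil u hu)) + gain φ (q.bypass.dropUntil u hu) := by
            rw [hloop, zero_add]
        _ = φ u _ + gain φ q.bypass := by
            rw [gain_cons, add_assoc, ← gain_append, Walk.take_spec]
    · rw [gain_cons]

lemma BalancedBelow.isCycle (hφ : ∀ x y, φ y x = -φ x y) {c : G.Walk u u}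
    (hc : gain φ c ≠ 0) (hmin : BalancedBelow G φ c.length) : c.IsCycle := by
  classical
  cases c with
  | nil => simp at hc
  | @cons _ v _ h q =>
    have hbypass : gain φ (Walk.cons h q.bypass) = gain φ (Walk.cons h q) := by
      rw [gain_cons, gain_cons, hmin.gain_bypass q (by simp)]
    have hlength : q.length ≤ q.bypass.length := by
      by_contra! hlt
      exact hc (hbypass ▸ hmin _ (by simpa using hlt))
    have hq : q.IsPath :=
      q.bypass_eq_self_of_length_le_length_bypass hlength ▸ q.bypass_isPath
    refine (q.cons_isCycle_iff h).2 ⟨hq, fun hmem => hc ?_⟩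
    rw [hq.eq_adj_toWalk_of_mem_edges (Sym2.eq_swap ▸ hmem)]
    simp [hφ u v]

lemma edist_coe_le_length {X : G.Subgraph} (q : G.Walk u v) (hq : q.toSubgraph ≤ X) :
    X.coe.edist ⟨u, hq.1 q.start_mem_verts_toSubgraph⟩ ⟨v, hq.1 q.end_mem_verts_toSubgraph⟩ ≤
      q.length := by
  have hlength : q.mapToSubgraph.length = q.length :=
    (Walk.length_map _ _).symm.trans (congrArg Walk.length q.map_mapToSubgraph_hom)
  have hle := (q.mapToSubgraph.map (Subgraph.inclusion hq)).edist_le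
  rwa [Walk.length_map, hlength] at hle

lemma BalancedBelow.isQuasiGeodesic_toSubgraph (hφ : ∀ x y, φ y x = -φ x y) {c : G.Walk w w}
    (hc : gain φ c ≠ 0) (hmin : BalancedBelow G φ c.length) :
    IsQuasiGeodesic G c.toSubgraph 1 := by
  classical
  rintro ⟨u, hu⟩ ⟨v, hv⟩
  rw [Nat.cast_one, one_mul]
  rw [Walk.mem_verts_toSubgraph] at hu hv
  obtain ⟨a, b, hab⟩ := Walk.mem_support_iff_exists_append.1
    ((c.mem_support_rotate_iff u hu).2 hv)
  have hlength : c.length = a.length + b.length := by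
    rw [← c.length_rotate u hu, hab, Walk.length_append]
  have hsub : c.toSubgraph = a.toSubgraph ⊔ b.toSubgraph := by
    rw [← c.toSubgraph_rotate hu, hab, Walk.toSubgraph_append]
  have ha := edist_coe_le_length a (hsub ▸ le_sup_left : _ ≤ c.toSubgraph)
  have hb := edist_coe_le_length b.reverse
    (b.toSubgraph_reverse.trans_le (hsub ▸ le_sup_right) : _ ≤ c.toSubgraph)
  by_contra! hlt
  -- A shortcut shorter than both arcs has the gain of each of them, so the arcs cancel.
  obtain ⟨q, hq⟩ := a.reachable.exists_walk_length_eq_edist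
  rw [← hq] at hlt
  have hqa : q.length < a.length := by exact_mod_cast hlt.trans_le ha
  have hqb : q.length < b.reverse.length := by exact_mod_cast hlt.trans_le hb
  rw [Walk.length_reverse] at hqb
  have hgain : gain φ a = gain φ b.reverse :=
    (hmin.gain_eq hφ a q (by omega)).trans (hmin.gain_eq hφ q b.reverse (by
      rw [Walk.length_reverse]; omega))
  apply hc
  rw [← gain_rotate_eq_zero_iff c hu, hab, gain_append, hgain, gain_reverse hφ, neg_add_cancel]

theorem exists_isCycle_isQuasiGeodesic_of_gain_ne_zero (hφ : ∀ x y, φ y x = -φ x y)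
    (h : ∃ (x : V) (c : G.Walk x x), gain φ c ≠ 0) :
    ∃ (x : V) (c : G.Walk x x), gain φ c ≠ 0 ∧ c.IsCycle ∧ IsQuasiGeodesic G c.toSubgraph 1 := by
  classical
  have hlength : ∃ k, ∃ (x : V) (c : G.Walk x x), gain φ c ≠ 0 ∧ c.length = k := by
    obtain ⟨x, c, hc⟩ := h
    exact ⟨_, x, c, hc, rfl⟩
  obtain ⟨x, c, hc, hk⟩ := Nat.find_spec hlength
  have hmin : BalancedBelow G φ c.length := fun y d hd => by
    by_contra hne
    exact Nat.find_min hlength (hk ▸ hd) ⟨y, d, hne, rfl⟩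
  exact ⟨x, c, hc, hmin.isCycle hφ hc, hmin.isQuasiGeodesic_toSubgraph hφ hc⟩

end Gain

section Crossing

variable {G : SimpleGraph V} {B C D T : Set V} {u v w : V}

/-- The integer gain whose value on a walk is the number of edges traversed from `C` to `T` minus
the number traversed from `T` to `C`; meant for disjoint `C` and `T`. -/
noncomputable def crossing (C T : Set V) (u v : V) : ℤ :=
  C.indicator 1 u * T.indicator 1 v - C.indicator 1 v * T.indicator 1 u

lemma crossing_swap (u v : V) : crossing C T v u = -crossing C T u v :=
  (neg_sub _ _).symm

lemma crossing_eq_one (hCT : Disjoint C T) (hu : u ∈ C) (hv : v ∈ T) : crossing C T u v = 1 := by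
  simp [crossing, hu, hv, hCT.notMem_of_mem_left hu]

lemma gain_crossing_eq_zero_of_avoids_left (q : G.Walk u v) (hq : ∀ x ∈ q.support, x ∉ C) :
    gain (crossing C T) q = 0 :=
  gain_eq_zero q fun x hx y hy _ => by simp [crossing, hq x hx, hq y hy]

lemma gain_crossing_eq_zero_of_avoids_right (q : G.Walk u v) (hq : ∀ x ∈ q.support, x ∉ T) :
    gain (crossing C T) q = 0 :=
  gain_eq_zero q fun x hx y hy _ => by simp [crossing, hq x hx, hq y hy]

lemma crossing_eq_indicator_sub_indicator (hCT : Disjoint C T) (huv : u ∈ C → v ∈ C ∪ T)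
    (hvu : v ∈ C → u ∈ C ∪ T) :
    crossing C T u v = C.indicator 1 u - C.indicator 1 v := by
  have hC : ∀ x ∈ C, x ∉ T := fun _ hx => hCT.notMem_of_mem_left hx
  by_cases hu : u ∈ C <;> by_cases hv : v ∈ C
  · simp [crossing, hu, hv, hC]
  · simp [crossing, hu, hv, (huv hu).resolve_left hv]
  · simp [crossing, hu, hv, (hvu hv).resolve_left hu]
  · simp [crossing, hu, hv]

lemma gain_crossing_eq_zero_of_avoids_boundary (hCT : Disjoint C T)
    (hbdry : ∀ x ∈ C, ∀ y, G.Adj x y → y ∈ C ∪ T ∪ B) (c : G.Walk u u)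
    (hc : ∀ x ∈ c.support, x ∉ B) : gain (crossing C T) c = 0 := by
  rw [gain_eq_sub (f := C.indicator 1) c, sub_self]
  intro x hx y hy hxy
  exact crossing_eq_indicator_sub_indicator hCT
    (fun hxC => (hbdry x hxC y hxy).resolve_right (hc y hy))
    (fun hyC => (hbdry y hyC x hxy.symm).resolve_right (hc x hx))

lemma exists_walk_of_preconnected_induce (hC : (G.induce C).Preconnected) (hu : u ∈ C)
    (hv : v ∈ C) : ∃ q : G.Walk u v, ∀ x ∈ q.support, x ∈ C := by
  rw [preconnected_induce_iff, Subgraph.preconnected_iff_forall_exists_walk_subgraph] at hC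
  obtain ⟨q, hq⟩ := hC hu hv
  exact ⟨q, fun x hx => hq.1 (q.mem_verts_toSubgraph.2 hx)⟩

lemma exists_gain_crossing_ne_zero (hC : (G.induce C).Preconnected)
    (hD : (G.induce D).Preconnected) (hCD : Disjoint C D) (hCT : Disjoint C T)
    (hBT : Disjoint B T) (hB : ∃ x ∈ C, ∃ y ∈ B ∩ D, G.Adj x y)
    (hT : ∃ x ∈ C, ∃ y ∈ T ∩ D, G.Adj x y) :
    ∃ (x : V) (c : G.Walk x x), gain (crossing C T) c ≠ 0 := by
  obtain ⟨x, hx, y, ⟨hyB, hyD⟩, hxy⟩ := hB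
  obtain ⟨x', hx', y', ⟨hyT', hyD'⟩, hxy'⟩ := hT
  obtain ⟨q, hq⟩ := exists_walk_of_preconnected_induce hC hx hx'
  obtain ⟨d, hd⟩ := exists_walk_of_preconnected_induce hD hyD' hyD
  have hto : gain (crossing C T) (Walk.cons hxy.symm q) = 0 :=
    gain_crossing_eq_zero_of_avoids_right _ <| by
      simpa using ⟨hBT.notMem_of_mem_left hyB, fun z hz => hCT.notMem_of_mem_left (hq z hz)⟩
  have hback : gain (crossing C T) d = 0 :=
    gain_crossing_eq_zero_of_avoids_left d fun z hz => hCD.notMem_of_mem_right (hd z hz)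
  refine ⟨y, (Walk.cons hxy.symm q).append (Walk.cons hxy' d), ?_⟩
  rw [gain_append, gain_cons hxy', hto, hback, crossing_eq_one hCT hx' hyT']
  decide

lemma two_mul_edist_le_length (c : G.Walk w w) (hu : u ∈ c.support) (hv : v ∈ c.support) :
    2 * G.edist u v ≤ c.length := by
  classical
  obtain ⟨a, b, hab⟩ := Walk.mem_support_iff_exists_append.1
    ((c.mem_support_rotate_iff u hu).2 hv)
  calc 2 * G.edist u v = G.edist u v + G.edist v u := by rw [two_mul, edist_comm (u := v)]
    _ ≤ a.length + b.length := add_le_add a.edist_le b.edist_le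
    _ = c.length := by rw [← c.length_rotate u hu, hab, Walk.length_append, Nat.cast_add]

theorem exists_long_geodesic_cycle_of_preconnected_of_disjoint {k : ℕ}
    (hC : (G.induce C).Preconnected) (hD : (G.induce D).Preconnected) (hCD : Disjoint C D)
    (hCT : Disjoint C T) (hk : 0 < k) (hBT : ∀ b ∈ B, ∀ t ∈ T, k ≤ G.edist b t)
    (hbdry : ∀ x ∈ C, ∀ y, G.Adj x y → y ∈ C ∪ T ∪ B)
    (hB : ∃ x ∈ C, ∃ y ∈ B ∩ D, G.Adj x y) (hT : ∃ x ∈ C, ∃ y ∈ T ∩ D, G.Adj x y) :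
    ∃ (w : V) (c : G.Walk w w), c.IsCycle ∧ 2 * k ≤ c.length ∧
      IsQuasiGeodesic G c.toSubgraph 1 := by
  have hdisj : Disjoint B T := Set.disjoint_left.2 fun b hb ht => by
    simpa [hk.ne'] using hBT b hb b ht
  obtain ⟨w, c, hc, hcycle, hgeo⟩ := exists_isCycle_isQuasiGeodesic_of_gain_ne_zero crossing_swap
    (exists_gain_crossing_ne_zero hC hD hCD hCT hdisj hB hT)
  obtain ⟨b, hbc, hbB⟩ : ∃ b ∈ c.support, b ∈ B := by
    by_contra! hnot
    exact hc (gain_crossing_eq_zero_of_avoids_boundary hCT hbdry c hnot)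
  obtain ⟨t, htc, htT⟩ : ∃ t ∈ c.support, t ∈ T := by
    by_contra! hnot
    exact hc (gain_crossing_eq_zero_of_avoids_right c hnot)
  refine ⟨w, c, hcycle, ?_, hgeo⟩
  have hlength : (2 * k : ℕ∞) ≤ c.length :=
    (mul_le_mul_right (hBT b hbB t htT) 2).trans (two_mul_edist_le_length c hbc htc)
  exact_mod_cast hlength

end Crossing

section Balls

variable {G : SimpleGraph V} {C S U : Set V}

lemma subset_ballSet (G : SimpleGraph V) (U : Set V) (r : ℕ) : U ⊆ ballSet G U r :=
  fun u hu => ⟨u, hu, by simp⟩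

lemma ballSet_range {ι : Type*} (p : ι → V) (r : ℕ) :
    ballSet G (Set.range p) r = {v | ∃ i, G.edist (p i) v ≤ r} :=
  Set.ext fun _ => Set.exists_range_iff

lemma mem_ballSet_image {ι : Type*} {p : ι → V} {I : Set ι} {r : ℕ} {v : V} :
    v ∈ ballSet G (p '' I) r ↔ ∃ i ∈ I, G.edist (p i) v ≤ r :=
  Set.exists_mem_image

lemma ballSet_mono {U' : Set V} (h : U ⊆ U') (r : ℕ) : ballSet G U r ⊆ ballSet G U' r :=
  fun _ ⟨u, hu, hv⟩ => ⟨u, h hu, hv⟩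

lemma exists_reachable_induce_ballSet {r : ℕ} {v : V} (hv : v ∈ ballSet G U r) :
    ∃ u, ∃ hu : u ∈ U,
      (G.induce (ballSet G U r)).Reachable ⟨u, subset_ballSet G U r hu⟩ ⟨v, hv⟩ := by
  classical
  obtain ⟨u, hu, huv⟩ := hv
  obtain ⟨q, hq⟩ := exists_walk_of_edist_ne_top (huv.trans_lt (ENat.natCast_lt_top r)).ne
  have hball : ∀ x ∈ q.support, x ∈ ballSet G U r := fun x hx => ⟨u, hu, calc
    G.edist u x ≤ (q.takeUntil x hx).length := edist_le _
    _ ≤ q.length := mod_cast q.length_takeUntil_le_length hx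
    _ ≤ r := hq ▸ huv⟩
  exact ⟨u, hu, (q.induce _ hball).reachable⟩

lemma preconnected_induce_ballSet (hU : (G.induce U).Preconnected) (r : ℕ) :
    (G.induce (ballSet G U r)).Preconnected := by
  rintro ⟨v, hv⟩ ⟨v', hv'⟩
  obtain ⟨u, hu, huv⟩ := exists_reachable_induce_ballSet hv
  obtain ⟨u', hu', huv'⟩ := exists_reachable_induce_ballSet hv'
  have huu' := (hU ⟨u, hu⟩ ⟨u', hu'⟩).map (G.induceHomOfLE (subset_ballSet G U r)).toHom
  exact huv.symm.trans (huu'.trans huv')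

lemma tsub_le_edist_of_mem_ballSet {U' : Set V} {r r' : ℕ} {k : ℕ∞}
    (hk : ∀ u ∈ U, ∀ u' ∈ U', k ≤ G.edist u u') {v v' : V} (hv : v ∈ ballSet G U r)
    (hv' : v' ∈ ballSet G U' r') : k - (r + r') ≤ G.edist v v' := by
  obtain ⟨u, hu, huv⟩ := hv
  obtain ⟨u', hu', huv'⟩ := hv'
  refine tsub_le_iff_left.2 ?_
  calc k ≤ G.edist u u' := hk u hu u' hu'
    _ ≤ G.edist u v + G.edist v v' + G.edist v' u' :=
      SimpleGraph.edist_triangle.trans (add_le_add_left SimpleGraph.edist_triangle _)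
    _ ≤ r + G.edist v v' + r' := by
      rw [edist_comm (u := v')]
      gcongr
    _ = r + r' + G.edist v v' := add_right_comm _ _ _

lemma preconnected_induce_range {H : SimpleGraph W} (hH : H.Preconnected) (f : H →g G) :
    (G.induce (Set.range f)).Preconnected :=
  hH.map (⟨Set.rangeFactorization f, f.map_rel⟩ : H →g G.induce (Set.range f))
    Set.rangeFactorization_surjective

lemma preconnected_induce_range_of_adj_succ {n : ℕ} {p : Fin (n + 1) → V}
    (hp : ∀ i : Fin n, G.Adj (p i.castSucc) (p i.succ)) :
    (G.induce (Set.range p)).Preconnected := by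
  have hstep : ∀ i j : Fin (n + 1), i.val + 1 = j.val → G.Adj (p i) (p j) := fun i j hij => by
    have hj : j = Fin.succ ⟨i, by omega⟩ := Fin.ext hij.symm
    exact hj ▸ hp ⟨i, by omega⟩
  exact preconnected_induce_range (pathGraph_preconnected (n + 1))
    ⟨p, fun {i j} hij => (pathGraph_adj.1 hij).elim (hstep i j) fun h => (hstep j i h).symm⟩

lemma IsCompOf.mem_union_of_adj (hC : IsCompOf G C S) {x y : V} (hx : x ∈ C) (hxy : G.Adj x y) :
    y ∈ C ∪ S := by
  obtain ⟨-, hdisj, hconn, hmax⟩ := hC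
  by_contra! hy
  rw [Set.mem_union, not_or] at hy
  refine hy.1 (hmax (C ∪ {y}) Set.subset_union_left ?_ ?_ ▸ Or.inr rfl)
  · exact Set.disjoint_union_left.2 ⟨hdisj, Set.disjoint_singleton_left.2 hy.2⟩
  · exact connected_induce_union hconn.preconnected Preconnected.of_subsingleton hx
      (Set.mem_singleton y) hxy

lemma IsCompOf.mem_union_ballSet_of_adj {ι : Type*} {p : ι → V} {I J : Set ι} {r : ℕ}
    (hC : IsCompOf G C (ballSet G (Set.range p) r)) {x y : V} (hx : x ∈ C) (hxy : G.Adj x y)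
    (hy : ∀ i, i ∉ I → i ∉ J → ¬ G.edist (p i) y ≤ r) :
    y ∈ C ∪ ballSet G (p '' J) r ∪ ballSet G (p '' I) r := by
  rcases hC.mem_union_of_adj hx hxy with hyC | hyball
  · exact .inl (.inl hyC)
  · rw [ballSet_range] at hyball
    obtain ⟨i, hi⟩ := hyball
    by_cases hI : i ∈ I
    · exact .inr (mem_ballSet_image.2 ⟨i, hI, hi⟩)
    · by_cases hJ : i ∈ J
      · exact .inl (.inr (mem_ballSet_image.2 ⟨i, hJ, hi⟩))
      · exact (hy i hI hJ hi).elim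

lemma tsub_le_edist_of_mem_ballSet_image {n a b r : ℕ} (hab : a ≤ b) {p : Fin (n + 1) → V}
    (hp : ∀ i j, i ≤ j → G.edist (p i) (p j) = ((j.val - i.val : ℕ) : ℕ∞)) {v v' : V}
    (hv : v ∈ ballSet G (p '' {i | i.val ≤ a}) r) (hv' : v' ∈ ballSet G (p '' {i | b ≤ i.val}) r) :
    ((b - a - 2 * r : ℕ) : ℕ∞) ≤ G.edist v v' := by
  have hends : ∀ u ∈ p '' {i | i.val ≤ a}, ∀ u' ∈ p '' {i | b ≤ i.val},
      ((b - a : ℕ) : ℕ∞) ≤ G.edist u u' := by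
    rintro _ ⟨i, hi, rfl⟩ _ ⟨j, hj, rfl⟩
    rw [hp i j (Fin.le_def.2 (hi.trans (hab.trans hj)))]
    exact_mod_cast tsub_le_tsub hj hi
  simpa [two_mul] using tsub_le_edist_of_mem_ballSet hends hv hv'

end Balls

theorem long_geodesic_cycle_of_component_attaching_to_both_ends_general
    {V : Type*} (G : SimpleGraph V) (r n m₀ m₁ : ℕ)
    (hm : m₀ + m₁ + 2 * r < n)
    (p : Fin (n + 1) → V)
    (hadj : ∀ i : Fin n, G.Adj (p i.castSucc) (p i.succ))
    (hgeo : ∀ i j : Fin (n + 1), i ≤ j →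
      G.edist (p i) (p j) = ((j.val - i.val : ℕ) : ℕ∞))
    (C : Set V)
    (hC : IsCompOf G C {v : V | ∃ i : Fin (n + 1), G.edist (p i) v ≤ (r : ℕ∞)})
    (hbot : ∃ x ∈ C, ∃ y : V, G.Adj x y ∧
      ∃ i : Fin (n + 1), i.val ≤ m₀ ∧ G.edist (p i) y ≤ (r : ℕ∞))
    (htop : ∃ x ∈ C, ∃ y : V, G.Adj x y ∧
      ∃ i : Fin (n + 1), n - m₁ ≤ i.val ∧ G.edist (p i) y ≤ (r : ℕ∞))
    (hmid : ∀ x ∈ C, ∀ y : V, G.Adj x y → ∀ i : Fin (n + 1),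
      m₀ < i.val → i.val < n - m₁ → ¬ G.edist (p i) y ≤ (r : ℕ∞)) :
    ∃ (w : V) (cyc : G.Walk w w), cyc.IsCycle ∧
      2 * (n - m₀ - m₁ - 2 * r) ≤ cyc.length ∧
      IsQuasiGeodesic G cyc.toSubgraph 1 := by
  rw [← ballSet_range] at hC
  set D := ballSet G (Set.range p) r
  set B := ballSet G (p '' {i | i.val ≤ m₀}) r
  set T := ballSet G (p '' {i | n - m₁ ≤ i.val}) r
  have hBD : B ⊆ D := ballSet_mono (Set.image_subset_range _ _) r
  have hTD : T ⊆ D := ballSet_mono (Set.image_subset_range _ _) r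
  have hD : (G.induce D).Preconnected :=
    preconnected_induce_ballSet (preconnected_induce_range_of_adj_succ hadj) r
  have hBT : ∀ b ∈ B, ∀ t ∈ T, ((n - m₀ - m₁ - 2 * r : ℕ) : ℕ∞) ≤ G.edist b t :=
    fun b hb t ht => by
      rw [Nat.sub_right_comm n]
      exact tsub_le_edist_of_mem_ballSet_image (by omega) hgeo hb ht
  have hbdry : ∀ x ∈ C, ∀ y, G.Adj x y → y ∈ C ∪ T ∪ B := fun x hx y hxy =>
    hC.mem_union_ballSet_of_adj hx hxy fun i hi hi' =>
      hmid x hx y hxy i (not_le.1 hi) (not_le.1 hi')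
  obtain ⟨x, hx, y, hxy, hy⟩ := hbot
  obtain ⟨x', hx', y', hxy', hy'⟩ := htop
  have hyB : y ∈ B := mem_ballSet_image.2 hy
  have hyT : y' ∈ T := mem_ballSet_image.2 hy'
  exact exists_long_geodesic_cycle_of_preconnected_of_disjoint hC.2.2.1.preconnected hD hC.2.1
    (hC.2.1.mono_right hTD) (by omega) hBT hbdry ⟨x, hx, y, ⟨hyB, hBD hyB⟩, hxy⟩
    ⟨x', hx', y', ⟨hyT, hTD hyT⟩, hxy'⟩

/-- Let `r, n, m₀, m₁ : ℕ` with `m := n - m₀ - m₁ - 2r > 0`, let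
`p₀ … p_n` be a geodesic path in `G`, and write `B_i` for the ball of radius `r` around
`p_i`. If a component `C` of `G` minus all the balls `B_i` has a neighbour both in
`⋃_{i ≤ m₀} B_i` and in `⋃_{i ≥ n - m₁} B_i` but none in any `B_i` with
`m₀ < i < n - m₁`, then `G` contains a geodesic cycle of length at least `2m`. -/
theorem long_geodesic_cycle_of_component_attaching_to_both_ends
    {V : Type*} [Fintype V] (G : SimpleGraph V) (r n m₀ m₁ : ℕ)
    (hm : m₀ + m₁ + 2 * r < n)
    (p : Fin (n + 1) → V)
    (hadj : ∀ i : Fin n, G.Adj (p i.castSucc) (p i.succ))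
    (hgeo : ∀ i j : Fin (n + 1), i ≤ j →
      G.edist (p i) (p j) = ((j.val - i.val : ℕ) : ℕ∞))
    (C : Set V)
    (hC : IsCompOf G C {v : V | ∃ i : Fin (n + 1), G.edist (p i) v ≤ (r : ℕ∞)})
    (hbot : ∃ x ∈ C, ∃ y : V, G.Adj x y ∧
      ∃ i : Fin (n + 1), i.val ≤ m₀ ∧ G.edist (p i) y ≤ (r : ℕ∞))
    (htop : ∃ x ∈ C, ∃ y : V, G.Adj x y ∧
      ∃ i : Fin (n + 1), n - m₁ ≤ i.val ∧ G.edist (p i) y ≤ (r : ℕ∞))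
    (hmid : ∀ x ∈ C, ∀ y : V, G.Adj x y → ∀ i : Fin (n + 1),
      m₀ < i.val → i.val < n - m₁ → ¬ G.edist (p i) y ≤ (r : ℕ∞)) :
    ∃ (w : V) (cyc : G.Walk w w), cyc.IsCycle ∧
      2 * (n - m₀ - m₁ - 2 * r) ≤ cyc.length ∧
      IsQuasiGeodesic G cyc.toSubgraph 1 :=
  long_geodesic_cycle_of_component_attaching_to_both_ends_general G r n m₀ m₁ hm p hadj hgeo C hC
    hbot htop hmid

end RadialPaper
end

section
/- Let G be a graph, S a set of vertices of G, C a connected component of G − S, and {M₀, M₁} a bipartition of S. For a cycle O in G, let W(O) be the number of M₀–M₁ paths contained in O that meet C. Suppose Q is an O₁-path for a cycle O₁ in G (a path with both endvertices on O₁ and otherwise disjoint from O₁), and let O₂ and O₃ be the two cycles in O₁ ∪ Q that contain Q. Then W(O₁) + W(O₂) + W(O₃) is even. -/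
open SimpleGraph

namespace RadialPaper

variable {V W N : Type*}

/-!
For a cycle `O`, the number `W(O)` has the parity of the number of `M₀`–`C` edges of `O`. Indeed,
cut `O` at its vertices in `S = M₀ ∪ M₁`. The interior of each resulting segment lies inside or
outside `C`. A segment outside `C` contributes to neither number. On a segment through `C` the
`M₀`–`C` edges are those with exactly one end in `M₀`, so their number is odd iff exactly one end of
the segment lies in `M₀`, that is, iff the segment is an `M₀`–`M₁` path. Since the edge set of `O₁`
is the symmetric difference of those of `O₂` and `O₃`, each `M₀`–`C` edge is counted an even number
of times in total.
-/

theorem finite_setOf_le {G : SimpleGraph V} {H : G.Subgraph} (hH : H.verts.Finite) :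
    {P : G.Subgraph | P ≤ H}.Finite := by
  have hinj : Function.Injective
      fun P : G.Subgraph => (P.verts, {d : V × V | P.Adj d.1 d.2}) := by
    intro P P' h
    obtain ⟨hverts, hadj⟩ := Prod.mk.inj h
    exact Subgraph.ext hverts (funext₂ fun a b => congrArg ((a, b) ∈ ·) hadj)
  refine ((hH.powerset.prod (hH.prod hH).powerset).preimage hinj.injOn).subset ?_
  exact fun P hP => ⟨hP.1, fun d hd => ⟨hP.1 (P.edge_vert hd), hP.1 (P.edge_vert hd.symm)⟩⟩

theorem even_ncard_symmDiff_add {α : Type*} {A B : Set α} (hA : A.Finite) (hB : B.Finite) :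
    Even ((symmDiff A B).ncard + A.ncard + B.ncard) := by
  have hsub : A ∩ B ⊆ A ∪ B := Set.inter_subset_left.trans Set.subset_union_left
  have hdiff : (symmDiff A B).ncard + (A ∩ B).ncard = (A ∪ B).ncard := by
    rw [symmDiff_eq_sup_sdiff_inf]
    exact Set.ncard_sdiff_add_ncard_of_subset hsub (hA.union hB)
  have hunion := Set.ncard_union_add_ncard_inter A B hA hB
  exact ⟨(A ∪ B).ncard, by omega⟩

section Walks

variable {G : SimpleGraph V} {u v : V}

theorem eq_of_isPath_of_edges_subset {p q : G.Walk u v} (hp : p.IsPath) (hq : q.IsPath)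
    (h : q.edges ⊆ p.edges) : q = p := by
  induction p with
  | nil => exact (Walk.isPath_iff_nil.1 hq).eq_nil
  | @cons u c v huc p ih =>
    cases q with
    | nil => exact absurd p.end_mem_support ((Walk.cons_isPath_iff _ _).1 hp).2
    | @cons _ c' _ huc' q =>
      obtain rfl : c' = c := by
        simpa using hp.eq_snd_of_mem_edges (h (by simp : s(u, c') ∈ (Walk.cons huc' q).edges))
      rw [Walk.cons_isPath_iff] at hp hq
      congr 1
      refine ih hp.1 hq.1 fun e he => ?_
      rcases List.mem_cons.1 (h (List.mem_cons_of_mem _ he)) with rfl | he'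
      · exact absurd (q.fst_mem_support_of_mem_edges he) hq.2
      · exact he'

theorem toSubgraph_le_or_le_of_le_sup {H₁ H₂ : G.Subgraph} {p : G.Walk u v} (hp : p.IsPath)
    (hle : p.toSubgraph ≤ H₁ ⊔ H₂)
    (hint : ∀ z ∈ p.support, z ≠ u → z ≠ v → z ∈ H₁.verts → z ∉ H₂.verts) :
    p.toSubgraph ≤ H₁ ∨ p.toSubgraph ≤ H₂ := by
  induction p with
  | nil => simpa using hle
  | @cons u c v huc p ih =>
    rw [Walk.cons_isPath_iff] at hp
    simp only [Walk.toSubgraph, sup_le_iff, subgraphOfAdj_le_iff, Subgraph.sup_adj] at hle ⊢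
    have hc : c = v ∨ (c ∈ H₁.verts → c ∉ H₂.verts) :=
      or_iff_not_imp_left.2 (hint c (by simp) huc.ne')
    rcases hc with rfl | hc
    · obtain rfl : p = Walk.nil := by simpa using hp.1
      simpa using hle.1.imp (fun h => ⟨h, h.snd_mem⟩) fun h => ⟨h, h.snd_mem⟩
    · have hcp : c ∈ p.toSubgraph.verts := p.start_mem_verts_toSubgraph
      have hrest := ih hp.1 hle.2 fun z hz _ hzv =>
        hint z (by simp [hz]) (ne_of_mem_of_not_mem hz hp.2) hzv
      rcases hrest with h₁ | h₂
      · exact Or.inl ⟨hle.1.resolve_right fun h => hc (h₁.1 hcp) h.snd_mem, h₁⟩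
      · exact Or.inr ⟨hle.1.resolve_left fun h => hc h.snd_mem (h₂.1 hcp), h₂⟩

theorem exists_eq_append_of_end_mem {S : Set V} (p : G.Walk u v) (hv : v ∈ S) :
    ∃ (t : V) (q : G.Walk u t) (r : G.Walk t v),
      p = q.append r ∧ t ∈ S ∧ ∀ z ∈ q.support, z ∈ S → z = t := by
  classical
  obtain ⟨t, ht, htp, hfirst⟩ := p.exists_mem_support_forall_mem_support_imp_eq
    (p.support.toFinset.filter (· ∈ S)) ⟨v, by simp [hv]⟩
  refine ⟨t, p.takeUntil t htp, p.dropUntil t htp, (p.take_spec htp).symm,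
    (Finset.mem_filter.1 ht).2, fun z hz hzS => hfirst z ?_ hz⟩
  simp [hzS, p.support_takeUntil_subset_support htp hz]

end Walks

section EdgeCount

variable {G : SimpleGraph V} {A B : Set V} {u v w : V}

open Classical in
/-- The number of edges between `A` and `B` on the walk `p`, counted with multiplicity. -/
noncomputable def betweenCount (A B : Set V) (p : G.Walk u v) : ℕ :=
  p.edges.countP (· ∈ (G.between A B).edgeSet)

theorem betweenCount_append (p : G.Walk u v) (q : G.Walk v w) :
    betweenCount A B (p.append q) = betweenCount A B p + betweenCount A B q := by
  simp only [betweenCount, Walk.edges_append, List.countP_append]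

theorem betweenCount_eq_ncard {p : G.Walk u v} (hp : p.IsTrail) :
    betweenCount A B p = (p.toSubgraph.edgeSet ∩ (G.between A B).edgeSet).ncard := by
  classical
  rw [betweenCount, List.countP_eq_length_filter,
    ← List.toFinset_card_of_nodup (hp.edges_nodup.filter _), ← Set.ncard_coe_finset]
  congr 1
  ext e
  simp

theorem even_betweenCount_compl_iff (p : G.Walk u v) :
    Even (betweenCount A Aᶜ p) ↔ (u ∈ A ↔ v ∈ A) := by
  induction p with
  | nil => simp [betweenCount]
  | @cons u c v huc p ih =>
    unfold betweenCount at ih ⊢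
    by_cases hu : u ∈ A <;> by_cases hc : c ∈ A <;>
      simp [between_adj, huc, hu, hc, ih, Nat.even_add_one]

end EdgeCount

/-- `C` is a union of connected components of `G - S`, expressed by closure under adjacency
outside `S`. -/
structure IsUnionOfComps (G : SimpleGraph V) (C S : Set V) : Prop where
  disjoint : Disjoint C S
  mem_of_adj : ∀ ⦃u v : V⦄, u ∈ C → v ∉ S → G.Adj u v → v ∈ C

theorem IsCompOf.isUnionOfComps {G : SimpleGraph V} {C S : Set V} (hC : IsCompOf G C S) :
    IsUnionOfComps G C S := by
  obtain ⟨-, hCS, hconn, hmax⟩ := hC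
  refine ⟨hCS, fun u v hu hv huv => ?_⟩
  have hdisj : Disjoint (C ∪ {u, v}) S := by
    simp [hCS, hv, Set.disjoint_left.1 hCS hu]
  have hconn' : (G.induce (C ∪ {u, v})).Connected :=
    induce_union_connected hconn.preconnected
      (induce_pair_connected_of_adj huv).preconnected ⟨u, hu, by simp⟩
  rw [← hmax _ Set.subset_union_left hdisj hconn']
  simp

theorem forall_mem_or_forall_notMem_of_isPath {G : SimpleGraph V} {C S : Set V}
    (hC : IsUnionOfComps G C S) {u v : V} {p : G.Walk u v} (hp : p.IsPath)
    (hS : ∀ z ∈ p.support, z ∈ S → z = v) :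
    (∀ z ∈ p.support, z ≠ v → z ∈ C) ∨ ∀ z ∈ p.support, z ≠ v → z ∉ C := by
  induction p with
  | nil => simp
  | @cons u c v huc p ih =>
    rw [Walk.cons_isPath_iff] at hp
    have hS' : ∀ z ∈ p.support, z ∈ S → z = v := fun z hz => hS z (by simp [hz])
    have huS : u ∉ S := fun h => hp.2 (hS u (by simp) h ▸ p.end_mem_support)
    by_cases hcv : c = v
    · subst hcv
      obtain rfl : p = Walk.nil := by simpa using hp.1
      by_cases hu : u ∈ C <;> simp [hu]
    · have hcS : c ∉ S := fun h => hcv (hS' c p.start_mem_support h)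
      refine (ih hp.1 hS').imp (fun h => ?_) fun h => ?_ <;>
        simp only [Walk.support_cons, List.forall_mem_cons]
      · exact ⟨fun _ => hC.mem_of_adj (h c p.start_mem_support hcv) huS huc.symm, h⟩
      · exact ⟨fun _ hu => h c p.start_mem_support hcv (hC.mem_of_adj hu hcS huc), h⟩

section PathCount

variable {G : SimpleGraph V} {M₀ M₁ C : Set V}

theorem Wcount_sup {H₁ H₂ : G.Subgraph} (hC : Disjoint C (M₀ ∪ M₁))
    (h₁ : H₁.verts.Finite) (h₂ : H₂.verts.Finite) (hinter : H₁.verts ∩ H₂.verts ⊆ M₀ ∪ M₁) :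
    Wcount G M₀ M₁ C (H₁ ⊔ H₂) = Wcount G M₀ M₁ C H₁ + Wcount G M₀ M₁ C H₂ := by
  unfold Wcount
  rw [← Set.ncard_union_eq _ ((finite_setOf_le h₁).subset fun _ h => h.1)
    ((finite_setOf_le h₂).subset fun _ h => h.1)]
  · congr 1
    ext P
    constructor
    · rintro ⟨hle, hP⟩
      obtain ⟨a, b, q, hq, rfl, -, -, hint, -⟩ := id hP
      exact (toSubgraph_le_or_le_of_le_sup hq hle fun z hz hza hzb hz₁ hz₂ =>
        hint z hz hza hzb (hinter ⟨hz₁, hz₂⟩)).imp (⟨·, hP⟩) (⟨·, hP⟩)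
    · rintro (⟨hle, hP⟩ | ⟨hle, hP⟩)
      exacts [⟨hle.trans le_sup_left, hP⟩, ⟨hle.trans le_sup_right, hP⟩]
  · rw [Set.disjoint_left]
    rintro _ ⟨hle₁, a, b, q, -, rfl, -, -, -, z, hz, hzC⟩ ⟨hle₂, -⟩
    have hzq := q.mem_verts_toSubgraph.2 hz
    exact Set.disjoint_left.1 hC hzC (hinter ⟨hle₁.1 hzq, hle₂.1 hzq⟩)

theorem Wcount_modEq_betweenCount_of_forall_notMem {u v : V} {p : G.Walk u v}
    (h : ∀ a ∈ p.support, a ∈ M₀ → ∀ b ∈ p.support, b ∉ C) :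
    Wcount G M₀ M₁ C p.toSubgraph ≡ betweenCount M₀ C p [MOD 2] := by
  have hW : Wcount G M₀ M₁ C p.toSubgraph = 0 := by
    rw [Wcount, ← Set.ncard_empty (α := G.Subgraph)]
    congr 1
    refine Set.eq_empty_of_forall_notMem ?_
    rintro _ ⟨hle, a, b, q, -, rfl, ha, -, -, z, hz, hzC⟩
    have hsupp : ∀ y ∈ q.support, y ∈ p.support := fun y hy =>
      p.mem_verts_toSubgraph.1 (hle.1 (q.mem_verts_toSubgraph.2 hy))
    exact h a (hsupp a q.start_mem_support) ha z (hsupp z hz) hzC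
  have hcount : betweenCount M₀ C p = 0 := by
    simp only [betweenCount, List.countP_eq_zero, decide_eq_true_eq]
    rintro ⟨a, b⟩ he (⟨-, ⟨ha, hb⟩ | ⟨ha, hb⟩⟩ : (G.between M₀ C).Adj a b)
    · exact h a (p.fst_mem_support_of_mem_edges he) ha b (p.snd_mem_support_of_mem_edges he) hb
    · exact h b (p.snd_mem_support_of_mem_edges he) hb a (p.fst_mem_support_of_mem_edges he) ha
  rw [hW, hcount]

section Segment

variable {u c t : V} {huc : G.Adj u c} {q : G.Walk c t}

theorem eq_toSubgraph_cons_of_isM01Path (hdisj : Disjoint M₀ M₁) (hq : q.IsPath)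
    (hu : u ∈ M₀ ∪ M₁) (hS : ∀ z ∈ q.support, z ∈ M₀ ∪ M₁ → z = t) {P : G.Subgraph}
    (hle : P ≤ (Walk.cons huc q).toSubgraph) (hP : IsM01Path G M₀ M₁ C P) :
    P = (Walk.cons huc q).toSubgraph ∧ ¬(u ∈ M₀ ↔ t ∈ M₀) := by
  obtain ⟨a, b, r, hr, rfl, ha, hb, -⟩ := hP
  have hends : ∀ z ∈ r.support, z ∈ M₀ ∪ M₁ → z = u ∨ z = t := fun z hz hzS =>
    (List.mem_cons.1 ((Walk.cons huc q).mem_verts_toSubgraph.1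
      (hle.1 (r.mem_verts_toSubgraph.2 hz)))).imp_right (hS z · hzS)
  have hbM₀ : b ∉ M₀ := Set.disjoint_right.1 hdisj hb
  have hab : a ≠ b := ne_of_mem_of_not_mem ha hbM₀
  have hp (hut : u ≠ t) : (Walk.cons huc q).IsPath :=
    (Walk.cons_isPath_iff _ _).2 ⟨hq, fun h => hut (hS u h hu)⟩
  have hedges : ∀ e ∈ r.edges, e ∈ (Walk.cons huc q).edges := fun e he =>
    (Walk.mem_edges_toSubgraph _).1 (Subgraph.edgeSet_mono hle (r.mem_edges_toSubgraph.2 he))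
  rcases hends a r.start_mem_support (Or.inl ha) with rfl | rfl <;>
    rcases hends b r.end_mem_support (Or.inr hb) with rfl | rfl
  · exact absurd rfl hab
  · exact ⟨by rw [eq_of_isPath_of_edges_subset (hp hab) hr hedges], by simp [ha, hbM₀]⟩
  · refine ⟨?_, by simp [ha, hbM₀]⟩
    rw [← eq_of_isPath_of_edges_subset (hp hab.symm) hr.reverse fun e he =>
      hedges e (by simpa using he), Walk.toSubgraph_reverse]
  · exact absurd rfl hab

theorem isM01Path_toSubgraph_cons (hC : Disjoint C (M₀ ∪ M₁)) (hq : q.IsPath)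
    (hu : u ∈ M₀ ∪ M₁) (ht : t ∈ M₀ ∪ M₁) (hqC : ∀ z ∈ q.support, z ≠ t → z ∈ C) (hct : c ≠ t)
    (hut : ¬(u ∈ M₀ ↔ t ∈ M₀)) : IsM01Path G M₀ M₁ C (Walk.cons huc q).toSubgraph := by
  have hpath : (Walk.cons huc q).IsPath := by
    refine (Walk.cons_isPath_iff _ _).2 ⟨hq, fun h => ?_⟩
    exact Set.disjoint_left.1 hC (hqC u h fun h => hut (h ▸ Iff.rfl)) hu
  have hint : ∀ z ∈ (Walk.cons huc q).support, z ≠ u → z ≠ t → z ∉ M₀ ∪ M₁ := fun z hz hzu hzt =>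
    Set.disjoint_left.1 hC (hqC z ((List.mem_cons.1 hz).resolve_left hzu) hzt)
  have hc : c ∈ C := hqC c q.start_mem_support hct
  by_cases huM₀ : u ∈ M₀
  · have htM₁ : t ∈ M₁ := ht.resolve_left fun h => hut (by simp [huM₀, h])
    exact ⟨u, t, Walk.cons huc q, hpath, rfl, huM₀, htM₁, hint, c, by simp, hc⟩
  · have htM₀ : t ∈ M₀ := by tauto
    exact ⟨t, u, (Walk.cons huc q).reverse, hpath.reverse, Walk.toSubgraph_reverse _, htM₀,
      hu.resolve_left huM₀, fun z hz hzt hzu =>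
        hint z (List.mem_reverse.1 (Walk.support_reverse _ ▸ hz)) hzu hzt, c, by simp, hc⟩

-- Every edge of a segment through `C` has an end in `C`, so leaving `M₀` means entering `C`.
theorem betweenCount_cons_eq_compl (hC : Disjoint C M₀)
    (hqC : ∀ z ∈ q.support, z ≠ t → z ∈ C) (hct : c ≠ t) :
    betweenCount M₀ C (Walk.cons huc q) = betweenCount M₀ M₀ᶜ (Walk.cons huc q) := by
  have hedge : ∀ a b, s(a, b) ∈ (Walk.cons huc q).edges → a ∈ C ∨ b ∈ C := by
    intro a b he
    rcases List.mem_cons.1 he with he | he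
    · have hc := hqC c q.start_mem_support hct
      have hab : s(a, b) = s(u, c) := he
      grind
    · by_cases hat : a = t
      · exact Or.inr (hqC b (q.snd_mem_support_of_mem_edges he)
          (hat ▸ (q.adj_of_mem_edges he).ne'))
      · exact Or.inl (hqC a (q.fst_mem_support_of_mem_edges he) hat)
  refine List.countP_congr fun e he => ?_
  induction e with
  | _ a b =>
    have := hedge a b he
    have := Set.disjoint_left.1 hC
    simp only [decide_eq_true_eq, mem_edgeSet, between_adj, Set.mem_compl_iff]
    grind

theorem Wcount_cons_modEq_betweenCount (hdisj : Disjoint M₀ M₁)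
    (hC : IsUnionOfComps G C (M₀ ∪ M₁)) (hq : q.IsPath) (hu : u ∈ M₀ ∪ M₁) (ht : t ∈ M₀ ∪ M₁)
    (hS : ∀ z ∈ q.support, z ∈ M₀ ∪ M₁ → z = t) :
    Wcount G M₀ M₁ C (Walk.cons huc q).toSubgraph ≡
      betweenCount M₀ C (Walk.cons huc q) [MOD 2] := by
  have hCS := Set.disjoint_right.1 hC.disjoint
  by_cases hmiss : ∀ z ∈ q.support, z ≠ t → z ∉ C
  · refine Wcount_modEq_betweenCount_of_forall_notMem fun _ _ _ z hz => ?_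
    rcases List.mem_cons.1 hz with rfl | hz
    · exact hCS hu
    · by_cases hzt : z = t
      exacts [hzt ▸ hCS ht, hmiss z hz hzt]
  have hqC := (forall_mem_or_forall_notMem_of_isPath hC hq hS).resolve_right hmiss
  have hct : c ≠ t := by
    rintro rfl
    obtain rfl : q = Walk.nil := by simpa using hq
    simp at hmiss
  have hpaths : {P | P ≤ (Walk.cons huc q).toSubgraph ∧ IsM01Path G M₀ M₁ C P} =
      {P | P = (Walk.cons huc q).toSubgraph ∧ ¬(u ∈ M₀ ↔ t ∈ M₀)} := by
    ext P
    refine ⟨fun h => eq_toSubgraph_cons_of_isM01Path hdisj hq hu hS h.1 h.2, ?_⟩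
    rintro ⟨rfl, hut⟩
    exact ⟨le_rfl, isM01Path_toSubgraph_cons hC.disjoint hq hu ht hqC hct hut⟩
  have hparity := even_betweenCount_compl_iff (A := M₀) (Walk.cons huc q)
  rw [Wcount, hpaths,
    betweenCount_cons_eq_compl (hC.disjoint.mono_right Set.subset_union_left) hqC hct]
  by_cases hut : u ∈ M₀ ↔ t ∈ M₀
  · simpa [Nat.ModEq, hut] using (Nat.even_iff.1 (hparity.2 hut)).symm
  · simpa [Nat.ModEq, hut] using (Nat.odd_iff.1 (Nat.not_even_iff_odd.1 (hut ∘ hparity.1))).symm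

end Segment

theorem Wcount_modEq_betweenCount_of_nodup (hdisj : Disjoint M₀ M₁)
    (hC : IsUnionOfComps G C (M₀ ∪ M₁)) {u v : V} (p : G.Walk u v) (hp : p.support.tail.Nodup)
    (hu : u ∈ M₀ ∪ M₁) (hv : v ∈ M₀ ∪ M₁) :
    Wcount G M₀ M₁ C p.toSubgraph ≡ betweenCount M₀ C p [MOD 2] := by
  induction hn : p.length using Nat.strong_induction_on generalizing u with
  | _ n ih =>
  cases p with
  | nil =>
    refine Wcount_modEq_betweenCount_of_forall_notMem fun _ _ _ z hz => ?_
    exact List.mem_singleton.1 hz ▸ Set.disjoint_right.1 hC.disjoint hu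
  | @cons _ c _ huc p =>
    obtain ⟨t, q, r, rfl, ht, hS⟩ := exists_eq_append_of_end_mem p hv
    have hpath : (q.append r).IsPath := Walk.IsPath.mk' hp
    have hnodup := hp
    rw [Walk.support_cons, List.tail_cons, Walk.support_append, List.nodup_append'] at hnodup
    obtain ⟨-, hr, hqr⟩ := hnodup
    have hinter : (Walk.cons huc q).toSubgraph.verts ∩ r.toSubgraph.verts ⊆ M₀ ∪ M₁ := by
      rintro z ⟨hzq, hzr⟩
      rw [Walk.mem_verts_toSubgraph] at hzq hzr
      rcases List.mem_cons.1 hzq with rfl | hzq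
      · exact hu
      · obtain rfl := (Walk.mem_support_iff r).1 hzr |>.resolve_right (hqr hzq)
        exact ht
    have hlen : r.length < n := by
      rw [← hn, Walk.length_cons, Walk.length_append]
      omega
    rw [← Walk.cons_append, Walk.toSubgraph_append, betweenCount_append,
      Wcount_sup hC.disjoint (by simp [List.finite_toSet]) (by simp [List.finite_toSet]) hinter]
    exact (Wcount_cons_modEq_betweenCount hdisj hC hpath.of_append_left hu ht hS).add
      (ih _ hlen r hr ht rfl)

theorem Wcount_cycle_modEq_ncard (hdisj : Disjoint M₀ M₁) (hC : IsUnionOfComps G C (M₀ ∪ M₁))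
    {w : V} {O : G.Walk w w} (hO : O.IsCycle) :
    Wcount G M₀ M₁ C O.toSubgraph ≡
      (O.toSubgraph.edgeSet ∩ (G.between M₀ C).edgeSet).ncard [MOD 2] := by
  classical
  by_cases hmeet : ∃ m ∈ O.support, m ∈ M₀
  · obtain ⟨m, hmO, hm⟩ := hmeet
    have hrot : (O.rotate m hmO).IsCycle := hO.rotate hmO
    have hmS : m ∈ M₀ ∪ M₁ := Or.inl hm
    rw [← O.toSubgraph_rotate hmO, ← betweenCount_eq_ncard hrot.isTrail]
    exact Wcount_modEq_betweenCount_of_nodup hdisj hC _ hrot.support_nodup hmS hmS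
  · rw [← betweenCount_eq_ncard hO.isTrail]
    exact Wcount_modEq_betweenCount_of_forall_notMem fun a ha haM => absurd ⟨a, ha, haM⟩ hmeet

end PathCount

theorem edgeSet_eq_symmDiff_of_sup_eq_of_inf_eq {G : SimpleGraph V} {H₁ H₂ H₃ K : G.Subgraph}
    (hsup : H₂ ⊔ H₃ = H₁ ⊔ K) (hinf : H₂ ⊓ H₃ = K) (hdisj : Disjoint H₁.edgeSet K.edgeSet) :
    H₁.edgeSet = symmDiff H₂.edgeSet H₃.edgeSet := by
  have hunion : H₂.edgeSet ∪ H₃.edgeSet = H₁.edgeSet ∪ K.edgeSet := by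
    rw [← Subgraph.edgeSet_sup, hsup, Subgraph.edgeSet_sup]
  have hinter : H₂.edgeSet ∩ H₃.edgeSet = K.edgeSet := by
    rw [← Subgraph.edgeSet_inf, hinf]
  calc H₁.edgeSet = (H₁.edgeSet ∪ K.edgeSet) \ K.edgeSet :=
        (Set.union_sdiff_cancel_right hdisj.le_bot).symm
    _ = (H₂.edgeSet ∪ H₃.edgeSet) \ (H₂.edgeSet ∩ H₃.edgeSet) := by rw [hunion, hinter]
    _ = symmDiff H₂.edgeSet H₃.edgeSet := (symmDiff_eq_sup_sdiff_inf _ _).symm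

theorem parity_of_M01_path_counts_general {G : SimpleGraph V} {M₀ M₁ C : Set V}
    (hdisj : Disjoint M₀ M₁) (hC : IsUnionOfComps G C (M₀ ∪ M₁))
    {w₁ w₂ w₃ : V} {O₁ : G.Walk w₁ w₁} {O₂ : G.Walk w₂ w₂} {O₃ : G.Walk w₃ w₃}
    (hO₁ : O₁.IsCycle) (hO₂ : O₂.IsCycle) (hO₃ : O₃.IsCycle)
    (hE : O₁.toSubgraph.edgeSet = symmDiff O₂.toSubgraph.edgeSet O₃.toSubgraph.edgeSet) :
    Even (Wcount G M₀ M₁ C O₁.toSubgraph + Wcount G M₀ M₁ C O₂.toSubgraph +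
      Wcount G M₀ M₁ C O₃.toSubgraph) := by
  have hfin {w : V} (O : G.Walk w w) :
      (O.toSubgraph.edgeSet ∩ (G.between M₀ C).edgeSet).Finite := by
    rw [Walk.edgeSet_toSubgraph]
    exact O.edges.finite_toSet.inter_of_left _
  have hcong := ((Wcount_cycle_modEq_ncard hdisj hC hO₁).add
    (Wcount_cycle_modEq_ncard hdisj hC hO₂)).add (Wcount_cycle_modEq_ncard hdisj hC hO₃)
  rw [hE, Set.inter_symmDiff_distrib_right] at hcong
  exact Nat.even_iff.2 (Eq.trans hcong
    (Nat.even_iff.1 (even_ncard_symmDiff_add (hfin O₂) (hfin O₃))))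

/-- Let `S` be a set of vertices of `G`, `C` a component of `G - S`, and
`{M₀, M₁}` a bipartition of `S`. For a cycle `O` let `W(O)` be the number of `M₀`–`M₁`
paths contained in `O` meeting `C`. If `Q` is an `O₁`-path for a cycle `O₁`, and `O₂`,
`O₃` are the two cycles of `O₁ ∪ Q` containing `Q`, then `W(O₁) + W(O₂) + W(O₃)` is
even. -/
theorem parity_of_M01_path_counts
    {V : Type*} [Fintype V] (G : SimpleGraph V) (S M₀ M₁ C : Set V)
    (hpart : M₀ ∪ M₁ = S) (hdisj : Disjoint M₀ M₁) (hC : IsCompOf G C S)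
    {w₁ : V} (O₁ : G.Walk w₁ w₁) (hO₁ : O₁.IsCycle)
    {x y : V} (hxy : x ≠ y) (Q : G.Walk x y) (hQ : Q.IsPath)
    (hQx : x ∈ O₁.support) (hQy : y ∈ O₁.support)
    (hQint : ∀ z ∈ Q.support, z ∈ O₁.support → z = x ∨ z = y)
    (hQedge : ∀ e ∈ Q.edges, e ∉ O₁.edges)
    {w₂ w₃ : V} (O₂ : G.Walk w₂ w₂) (O₃ : G.Walk w₃ w₃)
    (hO₂ : O₂.IsCycle) (hO₃ : O₃.IsCycle)
    (hQ₂ : Q.toSubgraph ≤ O₂.toSubgraph) (hQ₃ : Q.toSubgraph ≤ O₃.toSubgraph)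
    (hsup : O₂.toSubgraph ⊔ O₃.toSubgraph = O₁.toSubgraph ⊔ Q.toSubgraph)
    (hinf : O₂.toSubgraph ⊓ O₃.toSubgraph = Q.toSubgraph) :
    Even (Wcount G M₀ M₁ C O₁.toSubgraph + Wcount G M₀ M₁ C O₂.toSubgraph +
      Wcount G M₀ M₁ C O₃.toSubgraph) := by
  have hE : O₁.toSubgraph.edgeSet = symmDiff O₂.toSubgraph.edgeSet O₃.toSubgraph.edgeSet :=
    edgeSet_eq_symmDiff_of_sup_eq_of_inf_eq hsup hinf
      (by simpa [Set.disjoint_right] using hQedge)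
  exact parity_of_M01_path_counts_general hdisj (hpart ▸ hC.isUnionOfComps) hO₁ hO₂ hO₃ hE

end RadialPaper
end

section
/- Let U be a set of vertices of a connected graph G, let p₀ ∈ V(G) \ U be a vertex of maximal distance from U in G, and let P = p₀…p_n be a shortest p₀–U path in G. Given r ∈ ℕ, write B_i := B_G(p_i, r) for 0 ≤ i ≤ n. Suppose that a connected component C of G − ⋃_{i=0}^{n} B_i is disjoint from U and satisfies N_G(C) ⊆ ⋃_{i=0}^{ℓ} B_i for some ℓ ≤ n. Then dist_G(v, P) ≤ 2r + ℓ for every vertex v ∈ C. -/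
/-!
Let `u ∈ U` realise the distance from `v ∈ C` to `U`, and let `y` be the first vertex outside `C`
on a shortest `v`–`u` path. Since `p₀` is at least as far from `u` as `v` is, and `y` lies on the
shortest `v`–`u` path, `y` is at least as far from `p₀` as from `v`. But `y` lies in some `B_i` with
`i ≤ ℓ`, so `dist(p₀, y) ≤ ℓ + r`, and `v` has distance at most `ℓ + 2r` from `p_i`.
-/

open SimpleGraph

namespace RadialPaper

variable {V W N : Type*}

section

variable {G : SimpleGraph V} {U C : Set V}

theorem exists_adj_notMem_edist_add_edist_eq {v u : V} (hvu : G.Reachable v u) (hv : v ∈ C)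
    (hu : u ∉ C) :
    ∃ x ∈ C, ∃ y ∉ C, G.Adj x y ∧ G.edist v y + G.edist y u = G.edist v u := by
  classical
  obtain ⟨w, hw⟩ := hvu.exists_walk_length_eq_edist
  obtain ⟨d, hd, hx, hy⟩ := w.exists_boundary_dart C hv hu
  have hyw : d.snd ∈ w.support := w.dart_snd_mem_support_of_mem_darts hd
  refine ⟨d.fst, hx, d.snd, hy, d.adj, le_antisymm ?_ G.edist_triangle⟩
  calc G.edist v d.snd + G.edist d.snd u
      ≤ (w.takeUntil d.snd hyw).length + (w.dropUntil d.snd hyw).length :=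
        add_le_add (edist_le _) (edist_le _)
    _ = w.length := by
        rw [← Nat.cast_add, ← Walk.length_append, Walk.take_spec]
    _ = G.edist v u := hw

theorem edist_le_edist_of_edist_add_edist_eq {c v u y : V} (hyu : G.edist y u ≠ ⊤)
    (hy : G.edist v y + G.edist y u = G.edist v u) (hc : G.edist v u ≤ G.edist c u) :
    G.edist v y ≤ G.edist c y := by
  refine (ENat.add_le_add_iff_right hyu).mp ?_
  calc G.edist v y + G.edist y u = G.edist v u := hy
    _ ≤ G.edist c u := hc
    _ ≤ G.edist c y + G.edist y u := G.edist_triangle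

theorem exists_mem_eq_biInf {α : Type*} {s : Set α} {f : α → ℕ∞} (hfin : ⨅ a ∈ s, f a ≠ ⊤) :
    ∃ a ∈ s, f a = ⨅ a ∈ s, f a := by
  have hs : s.Nonempty := by
    rw [Set.nonempty_iff_ne_empty]
    rintro rfl
    simp at hfin
  have : Nonempty s := hs.to_subtype
  obtain ⟨a, ha⟩ := ENat.exists_eq_iInf fun a : s => f a
  exact ⟨a, a.2, ha.trans (iInf_subtype'' s f)⟩

theorem exists_adj_notMem_edist_le_edist {c v : V} (hCU : Disjoint C U) (hv : v ∈ C)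
    (hfin : ⨅ u ∈ U, G.edist v u ≠ ⊤)
    (hc : ⨅ u ∈ U, G.edist v u ≤ ⨅ u ∈ U, G.edist c u) :
    ∃ x ∈ C, ∃ y ∉ C, G.Adj x y ∧ G.edist v y ≤ G.edist c y := by
  obtain ⟨u, huU, hvu⟩ := exists_mem_eq_biInf hfin
  have hvu_ne_top : G.edist v u ≠ ⊤ := hvu ▸ hfin
  obtain ⟨x, hx, y, hy, hxy, hgeod⟩ := exists_adj_notMem_edist_add_edist_eq
    (edist_ne_top_iff_reachable.mp hvu_ne_top) hv (hCU.notMem_of_mem_right huU)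
  have hyu : G.edist y u ≠ ⊤ := ne_top_of_le_ne_top hvu_ne_top (hgeod ▸ le_add_self)
  have hvc : G.edist v u ≤ G.edist c u := hvu.trans_le (hc.trans (iInf₂_le u huU))
  exact ⟨x, hx, y, hy, hxy, edist_le_edist_of_edist_add_edist_eq hyu hgeod hvc⟩

theorem edist_zero_le_of_adj_succ {m : ℕ} {p : Fin (m + 1) → V}
    (hadj : ∀ i : Fin m, G.Adj (p i.castSucc) (p i.succ)) (i : Fin (m + 1)) :
    G.edist (p 0) (p i) ≤ (i : ℕ) := by
  induction i using Fin.induction with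
  | zero => simp
  | succ i ih =>
    calc G.edist (p 0) (p i.succ)
        ≤ G.edist (p 0) (p i.castSucc) + G.edist (p i.castSucc) (p i.succ) := G.edist_triangle
      _ ≤ (i : ℕ) + 1 := add_le_add ih (edist_eq_one_iff_adj.mpr (hadj i)).le
      _ = (i.succ : ℕ) := by simp

theorem components_attaching_to_end_are_close_general {m r ℓ : ℕ} {p : Fin (m + 1) → V}
    (hadj : ∀ i : Fin m, G.Adj (p i.castSucc) (p i.succ))
    (hfin : ⨅ u ∈ U, G.edist (p 0) u ≠ ⊤)
    (hmax : ∀ v ∈ C, ⨅ u ∈ U, G.edist v u ≤ ⨅ u ∈ U, G.edist (p 0) u)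
    (hCU : Disjoint C U)
    (hN : ∀ x ∈ C, ∀ y ∉ C, G.Adj x y →
      ∃ i : Fin (m + 1), i.val ≤ ℓ ∧ G.edist (p i) y ≤ r) :
    ∀ v ∈ C, ∃ i : Fin (m + 1), i.val ≤ ℓ ∧ G.edist v (p i) ≤ (2 * r + ℓ : ℕ) := by
  intro v hv
  obtain ⟨x, hx, y, hy, hxy, hvy⟩ :=
    exists_adj_notMem_edist_le_edist hCU hv (ne_top_of_le_ne_top hfin (hmax v hv)) (hmax v hv)
  obtain ⟨i, hi, hiy⟩ := hN x hx y hy hxy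
  have hpi : G.edist (p 0) (p i) ≤ ℓ := (edist_zero_le_of_adj_succ hadj i).trans (mod_cast hi)
  refine ⟨i, hi, ?_⟩
  calc G.edist v (p i) ≤ G.edist v y + G.edist y (p i) := G.edist_triangle
    _ ≤ G.edist (p 0) y + G.edist (p i) y := add_le_add hvy edist_comm.le
    _ ≤ G.edist (p 0) (p i) + G.edist (p i) y + G.edist (p i) y := by
        gcongr
        exact G.edist_triangle
    _ ≤ ℓ + r + r := by gcongr
    _ = (2 * r + ℓ : ℕ) := by push_cast; ring

end

/-- Let `U` be a set of vertices of a connected graph `G`, let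
`p₀ ∉ U` be of maximal distance from `U`, and let `P = p₀ … p_n` be a shortest `p₀`–`U`
path. If a component `C` of `G` minus the balls `B_i := B_G(p_i, r)` is disjoint from `U`
and `N_G(C) ⊆ ⋃_{i ≤ ℓ} B_i` for some `ℓ ≤ n`, then every vertex of `C` has distance at
most `2r + ℓ` from `P`. -/
theorem components_attaching_to_end_are_close
    {V : Type*} [Fintype V] (G : SimpleGraph V) (hconn : G.Connected)
    (U : Set V) (n r ℓ : ℕ) (hℓ : ℓ ≤ n)
    (p : Fin (n + 1) → V) (hp0 : p 0 ∉ U)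
    (hadj : ∀ i : Fin n, G.Adj (p i.castSucc) (p i.succ))
    (hinj : Function.Injective p)
    (hlast : p (Fin.last n) ∈ U)
    (hshort : (⨅ u ∈ U, G.edist (p 0) u) = (n : ℕ∞))
    (hmax : ∀ w : V, (⨅ u ∈ U, G.edist w u) ≤ (n : ℕ∞))
    (C : Set V)
    (hC : IsCompOf G C {v : V | ∃ i : Fin (n + 1), G.edist (p i) v ≤ (r : ℕ∞)})
    (hCU : ∀ x ∈ C, x ∉ U)
    (hN : ∀ x ∈ C, ∀ y : V, G.Adj x y → y ∉ C →
      ∃ i : Fin (n + 1), i.val ≤ ℓ ∧ G.edist (p i) y ≤ (r : ℕ∞)) :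
    ∀ v ∈ C, ∃ i : Fin (n + 1), G.edist v (p i) ≤ ((2 * r + ℓ : ℕ) : ℕ∞) := fun v hv =>
  (components_attaching_to_end_are_close_general hadj (hshort ▸ ENat.natCast_ne_top n)
    (fun w _ => hshort ▸ hmax w) (Set.disjoint_left.mpr hCU)
    (fun x hx y hy hxy => hN x hx y hxy hy) v hv).imp fun _ => And.right

end RadialPaper
end

section
/- Let P = p₀…p_n be a geodesic path in a graph G. Given vertices u, v of G, let Q be a shortest u–P path in G with endvertex q ∈ P, and let R be a shortest v–(P ∪ Q) path in G with endvertex r ∈ P ∪ Q. Suppose that at least one of the following holds: (i) r ∈ P and dist_G(q, r) ≥ 4·max{dist_G(u, P), dist_G(v, P)}; (ii) r ∈ Q and dist_G(q, r) ≥ 4·max{dist_G(v, Q), dist_G(p₀, q), dist_G(p_n, q)}. Then P ∪ Q ∪ R is a 3-quasi-geodesic subgraph of G. -/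
open SimpleGraph

namespace RadialPaper

variable {V W N : Type*}

/-!
Two estimates give the constant `3`. If `q` is a nearest vertex of `X` for every vertex of `Y`,
then going from `a ∈ Y` to `b ∈ X` via `q` costs at most
`d(a, q) + (d(q, a) + d(a, b)) ≤ 3 d(a, b)`; this handles two of the paths sharing an attaching
vertex. If instead `a` and `b` lie on the two pieces attached at `q` and `r`, with `d(a, q)` and
`d(b, r)` at most `d(q, r) / 4`, then `d(q, r) ≤ 2 d(a, b)` by the triangle inequality, and going
via `q` and `r` costs at most `(3 / 2) d(q, r) ≤ 3 d(a, b)`. In case (i) the pieces `Q` and `R` are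
attached to `P`; in case (ii) the pieces `P` and `R` are attached to `Q`.
-/

section Subgraphs

variable {G : SimpleGraph V} {X Y B L M : G.Subgraph} {c : ℕ} {a b q r : V}

theorem edist_coe_anti (h : X ≤ Y) (ha : a ∈ X.verts) (hb : b ∈ X.verts) :
    Y.coe.edist ⟨a, h.1 ha⟩ ⟨b, h.1 hb⟩ ≤ X.coe.edist ⟨a, ha⟩ ⟨b, hb⟩ :=
  le_iInf fun W => W.length_map (Subgraph.inclusion h) ▸ edist_le _

theorem length_mapToSubgraph (W : G.Walk a b) : W.mapToSubgraph.length = W.length :=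
  (W.mapToSubgraph.length_map W.toSubgraph.hom).symm.trans
    (congrArg Walk.length W.map_mapToSubgraph_hom)

theorem edist_coe_le_length_of_toSubgraph_le (W : G.Walk a b) (h : W.toSubgraph ≤ X) :
    X.coe.edist ⟨a, h.1 W.start_mem_verts_toSubgraph⟩ ⟨b, h.1 W.end_mem_verts_toSubgraph⟩ ≤
      W.length :=
  length_mapToSubgraph W ▸ (edist_coe_anti h _ _).trans (edist_le W.mapToSubgraph)

theorem IsQuasiGeodesic.mono {c' : ℕ} (hX : IsQuasiGeodesic G X c) (h : c ≤ c') :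
    IsQuasiGeodesic G X c' :=
  fun a b => (hX a b).trans (by gcongr)

theorem IsQuasiGeodesic.edist_coe_le (hX : IsQuasiGeodesic G X c) (h : X ≤ Y)
    (ha : a ∈ X.verts) (hb : b ∈ X.verts) :
    Y.coe.edist ⟨a, h.1 ha⟩ ⟨b, h.1 hb⟩ ≤ c * G.edist a b :=
  (edist_coe_anti h ha hb).trans (hX ⟨a, ha⟩ ⟨b, hb⟩)

theorem IsQuasiGeodesic.sup (hX : IsQuasiGeodesic G X c) (hY : IsQuasiGeodesic G Y c)
    (hXY : ∀ a (ha : a ∈ X.verts), ∀ b (hb : b ∈ Y.verts),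
      (X ⊔ Y).coe.edist ⟨a, Or.inl ha⟩ ⟨b, Or.inr hb⟩ ≤ c * G.edist a b) :
    IsQuasiGeodesic G (X ⊔ Y) c := by
  rintro ⟨a, ha | ha⟩ ⟨b, hb | hb⟩
  · exact hX.edist_coe_le le_sup_left ha hb
  · exact hXY a ha b hb
  · rw [edist_comm, G.edist_comm]
    exact hXY b hb a ha
  · exact hY.edist_coe_le le_sup_right ha hb

theorem IsQuasiGeodesic.sup_of_nearest (hB : IsQuasiGeodesic G B c) (hL : IsQuasiGeodesic G L c)
    (hqB : q ∈ B.verts) (hqL : q ∈ L.verts)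
    (hnear : ∀ a ∈ L.verts, ∀ b ∈ B.verts, G.edist a q ≤ G.edist a b) :
    IsQuasiGeodesic G (B ⊔ L) (3 * c) := by
  refine (hB.mono (by lia)).sup (hL.mono (by lia)) fun b hb a ha => ?_
  have haq : G.edist q a ≤ G.edist b a := by
    rw [G.edist_comm, G.edist_comm (u := b)]
    exact hnear a ha b hb
  calc (B ⊔ L).coe.edist ⟨b, Or.inl hb⟩ ⟨a, Or.inr ha⟩
    _ ≤ c * G.edist b q + c * G.edist q a :=
      SimpleGraph.edist_triangle.trans (add_le_add (hB.edist_coe_le le_sup_left hb hqB)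
        (hL.edist_coe_le le_sup_right hqL ha))
    _ ≤ c * (G.edist b a + G.edist a q) + c * G.edist q a := by
      gcongr
      exact SimpleGraph.edist_triangle
    _ ≤ c * (G.edist b a + G.edist b a) + c * G.edist b a := by
      rw [G.edist_comm (u := a)]
      gcongr
    _ = (3 * c : ℕ) * G.edist b a := by
      push_cast
      ring

theorem add_add_edist_le_of_far (hqr : G.Reachable q r) (haq : 4 * G.edist a q ≤ G.edist q r)
    (hbr : 4 * G.edist b r ≤ G.edist q r) :
    G.edist a q + G.edist q r + G.edist r b ≤ 3 * G.edist a b := by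
  have hdetour : G.edist q r ≤ G.edist a q + G.edist a b + G.edist b r := by
    rw [G.edist_comm (u := a) (v := q)]
    exact SimpleGraph.edist_triangle.trans (add_le_add_left SimpleGraph.edist_triangle _)
  have hfin := edist_ne_top_iff_reachable.2 hqr
  rw [G.edist_comm (u := r)]
  generalize G.edist q r = d, G.edist a q = s, G.edist b r = t, G.edist a b = w at *
  enat_to_nat
  all_goals lia

theorem IsQuasiGeodesic.sup_sup_of_far (hB : IsQuasiGeodesic G B c) (hL : IsQuasiGeodesic G L c)
    (hM : IsQuasiGeodesic G M c) (hqB : q ∈ B.verts) (hrB : r ∈ B.verts) (hqL : q ∈ L.verts)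
    (hrM : r ∈ M.verts) (hBL : IsQuasiGeodesic G (B ⊔ L) (3 * c))
    (hBM : IsQuasiGeodesic G (B ⊔ M) (3 * c)) (hqr : G.Reachable q r)
    (hLq : ∀ a ∈ L.verts, 4 * G.edist a q ≤ G.edist q r)
    (hMr : ∀ b ∈ M.verts, 4 * G.edist b r ≤ G.edist q r) :
    IsQuasiGeodesic G (B ⊔ L ⊔ M) (3 * c) := by
  have hB_le : B ≤ B ⊔ L ⊔ M := le_sup_left.trans le_sup_left
  have hL_le : L ≤ B ⊔ L ⊔ M := le_sup_right.trans le_sup_left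
  refine hBL.sup (hM.mono (by lia)) fun a ha b hb => ?_
  rcases ha with ha | ha
  · exact hBM.edist_coe_le (sup_le hB_le le_sup_right) (Or.inl ha) (Or.inr hb)
  calc (B ⊔ L ⊔ M).coe.edist ⟨a, hL_le.1 ha⟩ ⟨b, Or.inr hb⟩
    _ ≤ c * G.edist a q + c * G.edist q r + c * G.edist r b :=
      SimpleGraph.edist_triangle.trans (add_le_add
        (SimpleGraph.edist_triangle.trans (add_le_add (hL.edist_coe_le hL_le ha hqL)
          (hB.edist_coe_le hB_le hqB hrB)))
        (hM.edist_coe_le le_sup_right hrM hb))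
    _ = c * (G.edist a q + G.edist q r + G.edist r b) := by ring
    _ ≤ c * (3 * G.edist a b) := by
      gcongr
      exact add_add_edist_le_of_far hqr (hLq a ha) (hMr b hb)
    _ = (3 * c : ℕ) * G.edist a b := by
      push_cast
      ring

end Subgraphs

section Walks

variable {G : SimpleGraph V} {X : G.Subgraph} {x y u v q r a b : V}

theorem toSubgraph_le_of_isSubwalk {W : G.Walk a b} {P : G.Walk x y} (h : W.IsSubwalk P) :
    W.toSubgraph ≤ P.toSubgraph := by
  obtain ⟨_, _, rfl⟩ := h
  simp only [Walk.toSubgraph_append]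
  exact le_sup_right.trans le_sup_left

theorem exists_isSubwalk_of_mem_support {P : G.Walk x y} (ha : a ∈ P.support)
    (hb : b ∈ P.support) :
    (∃ W : G.Walk a b, W.IsSubwalk P) ∨ ∃ W : G.Walk b a, W.IsSubwalk P := by
  classical
  rw [← P.take_spec ha, Walk.mem_support_append_iff] at hb
  rcases hb with hb | hb
  · exact .inr ⟨_, (Walk.isSubwalk_dropUntil _ hb).trans (P.isSubwalk_takeUntil ha)⟩
  · exact .inl ⟨_, (Walk.isSubwalk_takeUntil _ hb).trans (P.isSubwalk_dropUntil ha)⟩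

theorem length_eq_edist_of_isSubwalk {W : G.Walk a b} {P : G.Walk x y}
    (hP : P.length = G.dist x y) (hW : W.IsSubwalk P) : (W.length : ℕ∞) = G.edist a b := by
  rw [length_eq_dist_of_subwalk hP hW, W.reachable.coe_dist_eq_edist]

theorem edist_coe_le_of_isSubwalk {W : G.Walk a b} {P : G.Walk x y}
    (hP : P.length = G.dist x y) (hW : W.IsSubwalk P)
    (ha : a ∈ P.toSubgraph.verts) (hb : b ∈ P.toSubgraph.verts) :
    P.toSubgraph.coe.edist ⟨a, ha⟩ ⟨b, hb⟩ ≤ G.edist a b := by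
  rw [← length_eq_edist_of_isSubwalk hP hW]
  exact edist_coe_le_length_of_toSubgraph_le W (toSubgraph_le_of_isSubwalk hW)

theorem isQuasiGeodesic_one_toSubgraph {P : G.Walk x y} (hP : P.length = G.dist x y) :
    IsQuasiGeodesic G P.toSubgraph 1 := by
  rintro ⟨a, ha⟩ ⟨b, hb⟩
  rw [Nat.cast_one, one_mul]
  rcases exists_isSubwalk_of_mem_support (P.mem_verts_toSubgraph.1 ha)
    (P.mem_verts_toSubgraph.1 hb) with ⟨W, hW⟩ | ⟨W, hW⟩
  · exact edist_coe_le_of_isSubwalk hP hW ha hb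
  · rw [edist_comm, G.edist_comm]
    exact edist_coe_le_of_isSubwalk hP hW hb ha

theorem edist_add_edist_le_length {P : G.Walk x y} (ha : a ∈ P.support) :
    G.edist x a + G.edist a y ≤ P.length := by
  classical
  rw [← congrArg Walk.length (P.take_spec ha), Walk.length_append, Nat.cast_add]
  exact add_le_add (edist_le _) (edist_le _)

theorem reachable_of_mem_support {P : G.Walk x y} (ha : a ∈ P.support) (hb : b ∈ P.support) :
    G.Reachable a b := by
  rcases exists_isSubwalk_of_mem_support ha hb with ⟨W, -⟩ | ⟨W, -⟩
  exacts [W.reachable, W.reachable.symm]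

theorem edist_le_max_edist_of_mem_support {P : G.Walk x y} (hP : P.length = G.dist x y)
    (hq : q ∈ P.support) (ha : a ∈ P.support) :
    G.edist a q ≤ max (G.edist x q) (G.edist y q) := by
  classical
  rw [← P.take_spec hq, Walk.mem_support_append_iff] at ha
  rcases ha with ha | ha
  · rw [← length_eq_edist_of_isSubwalk hP (P.isSubwalk_takeUntil hq)]
    exact le_max_of_le_left (le_add_self.trans (edist_add_edist_le_length ha))
  · rw [G.edist_comm, G.edist_comm (u := y),
      ← length_eq_edist_of_isSubwalk hP (P.isSubwalk_dropUntil hq)]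
    exact le_max_of_le_right (le_self_add.trans (edist_add_edist_le_length ha))

theorem le_add_length_of_adj_le {f : V → ℕ} (hf : ∀ ⦃a b⦄, G.Adj a b → f b ≤ f a + 1)
    (W : G.Walk a b) : f b ≤ f a + W.length := by
  induction W with
  | nil => exact le_self_add
  | cons hadj W ih =>
    rw [Walk.length_cons]
    have := hf hadj
    lia

theorem length_le_edist_coe_toSubgraph {P : G.Walk x y} (hP : P.IsPath) :
    (P.length : ℕ∞) ≤ P.toSubgraph.coe.edist ⟨x, P.start_mem_verts_toSubgraph⟩
      ⟨y, P.end_mem_verts_toSubgraph⟩ := by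
  classical
  let index (a : P.toSubgraph.verts) : ℕ := hP.pathGraphIsoToSubgraph.symm a
  have hindex ⦃a b⦄ (h : P.toSubgraph.coe.Adj a b) : index b ≤ index a + 1 := by
    have := pathGraph_adj.1 (hP.pathGraphIsoToSubgraph.symm.map_adj_iff.2 h)
    lia
  have hx : index ⟨x, P.start_mem_verts_toSubgraph⟩ = 0 := by
    have h : hP.pathGraphIsoToSubgraph 0 = ⟨x, P.start_mem_verts_toSubgraph⟩ :=
      Subtype.ext (by simp [Walk.IsPath.pathGraphIsoToSubgraph, Walk.pathGraphHomToSubgraph])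
    simp [index, ← h]
  have hy : index ⟨y, P.end_mem_verts_toSubgraph⟩ = P.length := by
    have h : hP.pathGraphIsoToSubgraph (Fin.last P.length) = ⟨y, P.end_mem_verts_toSubgraph⟩ :=
      Subtype.ext (by simp [Walk.IsPath.pathGraphIsoToSubgraph, Walk.pathGraphHomToSubgraph])
    simp [index, ← h]
  refine le_iInf fun W => ?_
  simpa [hx, hy] using le_add_length_of_adj_le hindex W

theorem IsQuasiGeodesic.length_eq_dist {P : G.Walk x y} (hgeo : IsQuasiGeodesic G P.toSubgraph 1)
    (hP : P.IsPath) : P.length = G.dist x y := by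
  refine le_antisymm ?_ (dist_le P)
  have hle := (length_le_edist_coe_toSubgraph hP).trans (hgeo _ _)
  rwa [Nat.cast_one, one_mul, ← P.reachable.coe_dist_eq_edist, Nat.cast_le] at hle

/-- `Q` is a shortest walk from its initial vertex to the set `S`, ending in `S`. A shortest
walk is a path, so this is the notion of a shortest `u`–`S` path. -/
def IsShortestWalkTo (S : Set V) (Q : G.Walk u q) : Prop :=
  q ∈ S ∧ ∀ z ∈ S, ∀ W : G.Walk u z, Q.length ≤ W.length

namespace IsShortestWalkTo

variable {S : Set V} {Q : G.Walk u q}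

theorem length_le_edist (hQ : IsShortestWalkTo S Q) (hb : b ∈ S) :
    (Q.length : ℕ∞) ≤ G.edist u b :=
  le_iInf fun W => Nat.cast_le.2 (hQ.2 b hb W)

theorem length_le_iInf_edist (hQ : IsShortestWalkTo S Q) :
    (Q.length : ℕ∞) ≤ ⨅ z ∈ S, G.edist u z :=
  le_iInf₂ fun _ => hQ.length_le_edist

theorem length_eq_dist (hQ : IsShortestWalkTo S Q) : Q.length = G.dist u q := by
  rw [← Nat.cast_inj (R := ℕ∞), Q.reachable.coe_dist_eq_edist]
  exact (hQ.length_le_edist hQ.1).antisymm (edist_le Q)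

theorem isQuasiGeodesic_one (hQ : IsShortestWalkTo S Q) : IsQuasiGeodesic G Q.toSubgraph 1 :=
  isQuasiGeodesic_one_toSubgraph hQ.length_eq_dist

theorem edist_end_le_iInf_edist (hQ : IsShortestWalkTo S Q) (ha : a ∈ Q.toSubgraph.verts) :
    G.edist a q ≤ ⨅ z ∈ S, G.edist u z :=
  le_add_self.trans ((edist_add_edist_le_length (Q.mem_verts_toSubgraph.1 ha)).trans
    hQ.length_le_iInf_edist)

theorem edist_end_le_edist (hQ : IsShortestWalkTo S Q) (ha : a ∈ Q.toSubgraph.verts)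
    (hb : b ∈ S) : G.edist a q ≤ G.edist a b := by
  rw [Walk.mem_verts_toSubgraph] at ha
  have hua : G.edist u a ≠ ⊤ :=
    edist_ne_top_iff_reachable.2 (reachable_of_mem_support Q.start_mem_support ha)
  refine (ENat.add_le_add_iff_left hua).1 ?_
  calc G.edist u a + G.edist a q
    _ ≤ Q.length := edist_add_edist_le_length ha
    _ ≤ G.edist u b := hQ.length_le_edist hb
    _ ≤ G.edist u a + G.edist a b := SimpleGraph.edist_triangle

theorem isQuasiGeodesic_sup (hQ : IsShortestWalkTo X.verts Q) (hX : IsQuasiGeodesic G X 1) :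
    IsQuasiGeodesic G (X ⊔ Q.toSubgraph) 3 :=
  hX.sup_of_nearest hQ.isQuasiGeodesic_one hQ.1 Q.end_mem_verts_toSubgraph
    fun _ ha _ => hQ.edist_end_le_edist ha

theorem isQuasiGeodesic_sup_sup_of_far {R : G.Walk v r} (hQ : IsShortestWalkTo X.verts Q)
    (hR : IsShortestWalkTo X.verts R) (hX : IsQuasiGeodesic G X 1) (hqr : G.Reachable q r)
    (hu : 4 * ⨅ z ∈ X.verts, G.edist u z ≤ G.edist q r)
    (hv : 4 * ⨅ z ∈ X.verts, G.edist v z ≤ G.edist q r) :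
    IsQuasiGeodesic G (X ⊔ Q.toSubgraph ⊔ R.toSubgraph) 3 :=
  hX.sup_sup_of_far hQ.isQuasiGeodesic_one hR.isQuasiGeodesic_one hQ.1 hR.1
    Q.end_mem_verts_toSubgraph R.end_mem_verts_toSubgraph (hQ.isQuasiGeodesic_sup hX)
    (hR.isQuasiGeodesic_sup hX) hqr
    (fun _ ha => (mul_le_mul_right (hQ.edist_end_le_iInf_edist ha) 4).trans hu)
    (fun _ hb => (mul_le_mul_right (hR.edist_end_le_iInf_edist hb) 4).trans hv)

theorem isQuasiGeodesic_sup_sup_of_far_of_near {R : G.Walk v r} (hQ : IsShortestWalkTo X.verts Q)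
    (hR : IsShortestWalkTo Q.toSubgraph.verts R) (hX : IsQuasiGeodesic G X 1)
    (hXq : ∀ a ∈ X.verts, 4 * G.edist a q ≤ G.edist q r)
    (hv : 4 * ⨅ z ∈ Q.toSubgraph.verts, G.edist v z ≤ G.edist q r) :
    IsQuasiGeodesic G (X ⊔ Q.toSubgraph ⊔ R.toSubgraph) 3 := by
  rw [sup_comm X]
  exact hQ.isQuasiGeodesic_one.sup_sup_of_far hX hR.isQuasiGeodesic_one
    Q.end_mem_verts_toSubgraph hR.1 hQ.1 R.end_mem_verts_toSubgraph
    (sup_comm X _ ▸ hQ.isQuasiGeodesic_sup hX) (hR.isQuasiGeodesic_sup hQ.isQuasiGeodesic_one)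
    (reachable_of_mem_support Q.end_mem_support (Q.mem_verts_toSubgraph.1 hR.1)) hXq
    (fun _ hb => (mul_le_mul_right (hR.edist_end_le_iInf_edist hb) 4).trans hv)

end IsShortestWalkTo

end Walks

theorem tripod_is_three_quasi_geodesic_general
    (G : SimpleGraph V) {x y : V}
    (P : G.Walk x y) (hP : P.IsPath) (hPgeo : IsQuasiGeodesic G P.toSubgraph 1)
    (u v : V) {qv : V} (hqv : qv ∈ P.support)
    (Q : G.Walk u qv)
    (hQshort : ∀ z ∈ P.support, ∀ W : G.Walk u z, Q.length ≤ W.length)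
    {rv : V} (R : G.Walk v rv)
    (hRshort : ∀ z : V, (z ∈ P.support ∨ z ∈ Q.support) →
      ∀ W : G.Walk v z, R.length ≤ W.length)
    (hcase :
      (rv ∈ P.support ∧
        4 * max (⨅ z ∈ P.support, G.edist u z) (⨅ z ∈ P.support, G.edist v z) ≤
          G.edist qv rv) ∨
      (rv ∈ Q.support ∧
        4 * max (⨅ z ∈ Q.support, G.edist v z)
            (max (G.edist x qv) (G.edist y qv)) ≤
          G.edist qv rv)) :
    IsQuasiGeodesic G (P.toSubgraph ⊔ Q.toSubgraph ⊔ R.toSubgraph) 3 := by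
  simp only [← P.mem_verts_toSubgraph, ← Q.mem_verts_toSubgraph]
    at hqv hQshort hRshort hcase
  have hQ : IsShortestWalkTo P.toSubgraph.verts Q := ⟨hqv, hQshort⟩
  rcases hcase with ⟨hrv, hfar⟩ | ⟨hrv, hfar⟩
  · have hR : IsShortestWalkTo P.toSubgraph.verts R := ⟨hrv, fun z hz => hRshort z (.inl hz)⟩
    have hqr : G.Reachable qv rv :=
      reachable_of_mem_support (P.mem_verts_toSubgraph.1 hqv) (P.mem_verts_toSubgraph.1 hrv)
    rw [mul_max, max_le_iff] at hfar
    exact hQ.isQuasiGeodesic_sup_sup_of_far hR hPgeo hqr hfar.1 hfar.2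
  · have hR : IsShortestWalkTo Q.toSubgraph.verts R := ⟨hrv, fun z hz => hRshort z (.inr hz)⟩
    rw [mul_max, max_le_iff] at hfar
    refine hQ.isQuasiGeodesic_sup_sup_of_far_of_near hR hPgeo (fun a ha => ?_) hfar.1
    have ha_near : G.edist a qv ≤ max (G.edist x qv) (G.edist y qv) :=
      edist_le_max_edist_of_mem_support (hPgeo.length_eq_dist hP)
        (P.mem_verts_toSubgraph.1 hqv) (P.mem_verts_toSubgraph.1 ha)
    exact (mul_le_mul_right ha_near 4).trans hfar.2

/-- Let `P` be a geodesic path in `G` from `x` to `y`, let `Q` be a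
shortest `u`–`P` path with endvertex `qv ∈ P`, and let `R` be a shortest `v`–`(P ∪ Q)`
path with endvertex `rv ∈ P ∪ Q`. If (i) `rv ∈ P` and
`dist_G(qv, rv) ≥ 4·max{dist_G(u, P), dist_G(v, P)}`, or (ii) `rv ∈ Q` and
`dist_G(qv, rv) ≥ 4·max{dist_G(v, Q), dist_G(x, qv), dist_G(y, qv)}`, then `P ∪ Q ∪ R`
is a `3`-quasi-geodesic subgraph of `G`. -/
theorem tripod_is_three_quasi_geodesic
    {V : Type*} [Fintype V] (G : SimpleGraph V) {x y : V}
    (P : G.Walk x y) (hP : P.IsPath) (hPgeo : IsQuasiGeodesic G P.toSubgraph 1)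
    (u v : V) {qv : V} (hqv : qv ∈ P.support)
    (Q : G.Walk u qv) (hQ : Q.IsPath)
    (hQshort : ∀ z ∈ P.support, ∀ W : G.Walk u z, Q.length ≤ W.length)
    {rv : V} (hrv : rv ∈ P.support ∨ rv ∈ Q.support)
    (R : G.Walk v rv) (hR : R.IsPath)
    (hRshort : ∀ z : V, (z ∈ P.support ∨ z ∈ Q.support) →
      ∀ W : G.Walk v z, R.length ≤ W.length)
    (hcase :
      (rv ∈ P.support ∧
        4 * max (⨅ z ∈ P.support, G.edist u z) (⨅ z ∈ P.support, G.edist v z) ≤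
          G.edist qv rv) ∨
      (rv ∈ Q.support ∧
        4 * max (⨅ z ∈ Q.support, G.edist v z)
            (max (G.edist x qv) (G.edist y qv)) ≤
          G.edist qv rv)) :
    IsQuasiGeodesic G (P.toSubgraph ⊔ Q.toSubgraph ⊔ R.toSubgraph) 3 :=
  tripod_is_three_quasi_geodesic_general G P hP hPgeo u v hqv Q hQshort R hRshort hcase

end RadialPaper
end
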